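/- arXiv:2510.02122 — 2 statements merged into one kernel-verified Lean document; each statement's English description precedes it below -/
import Mathlib

section
/- Let n ≥ 1 and let c_1, …, c_{2n} ∈ ℂ^{2^n × 2^n} be Majorana operators. Let H = H_class + H_quad where H_class = Σ_{(j,k)∈E} w_{jk}(1/4 − n_j n_k) + Σ_{j∈V} μ_j (n_j − 1/2) and H_quad = Σ_{(j,k)∈E'} w'_{jk}(−a_j† a_k − a_k† a_j), with w_{jk} ≥ 0, w'_{jk} ∈ ℝ, μ_j ∈ ℝ. Then (λ_max(H_class) + λ_max(H_quad))/3 ≤ λ_max(H) ≤ λ_max(H_class) + λ_max(H_quad). -/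
open Matrix
open scoped ComplexOrder

noncomputable section

/-- A family of `2n` Majorana operators on `ℂ^(2^n)`. -/
def IsMajorana (n : ℕ) (c : Fin (2*n) → Matrix (Fin (2^n)) (Fin (2^n)) ℂ) : Prop :=
  (∀ j, (c j).IsHermitian) ∧
  ∀ j k, c j * c k + c k * c j =
    if j = k then (2 : ℂ) • (1 : Matrix (Fin (2^n)) (Fin (2^n)) ℂ) else 0

/-- The first Majorana operator of mode `j` (i.e. `c_{2j-1}` in 1-based indexing). -/
def majA (n : ℕ) (c : Fin (2*n) → Matrix (Fin (2^n)) (Fin (2^n)) ℂ) (j : Fin n) :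
    Matrix (Fin (2^n)) (Fin (2^n)) ℂ :=
  c ⟨2*j, by have := j.isLt; omega⟩

/-- The second Majorana operator of mode `j` (i.e. `c_{2j}` in 1-based indexing). -/
def majB (n : ℕ) (c : Fin (2*n) → Matrix (Fin (2^n)) (Fin (2^n)) ℂ) (j : Fin n) :
    Matrix (Fin (2^n)) (Fin (2^n)) ℂ :=
  c ⟨2*j+1, by have := j.isLt; omega⟩

/-- Annihilation operator `a_j = (c_{2j-1} + i c_{2j})/2`. -/
def ann (n : ℕ) (c : Fin (2*n) → Matrix (Fin (2^n)) (Fin (2^n)) ℂ) (j : Fin n) :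
    Matrix (Fin (2^n)) (Fin (2^n)) ℂ :=
  ((1:ℂ)/2) • (majA n c j + Complex.I • majB n c j)

/-- Number operator `n_j = a_j† a_j`. -/
def num (n : ℕ) (c : Fin (2*n) → Matrix (Fin (2^n)) (Fin (2^n)) ℂ) (j : Fin n) :
    Matrix (Fin (2^n)) (Fin (2^n)) ℂ :=
  (ann n c j)ᴴ * ann n c j

/-- The fermionic Gaussian state `2^{-n} ∏_j (1 + i λ_j c̃_{2j-1} c̃_{2j})`,
where `c̃_i = Σ_k R_{ik} c_k`. -/
def gaussOf (n : ℕ) (c : Fin (2*n) → Matrix (Fin (2^n)) (Fin (2^n)) ℂ)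
    (lam : Fin n → ℝ) (R : Matrix (Fin (2*n)) (Fin (2*n)) ℝ) :
    Matrix (Fin (2^n)) (Fin (2^n)) ℂ :=
  ((2:ℂ)^n)⁻¹ •
    ((List.finRange n).map (fun j =>
      (1 : Matrix (Fin (2^n)) (Fin (2^n)) ℂ) +
        (Complex.I * (lam j : ℂ)) •
          ((∑ k, ((R ⟨2*j, by have := j.isLt; omega⟩ k : ℝ) : ℂ) • c k) *
           (∑ k, ((R ⟨2*j+1, by have := j.isLt; omega⟩ k : ℝ) : ℂ) • c k)))).prod

/-- A (generally mixed) fermionic Gaussian state. -/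
def IsGaussianState (n : ℕ) (c : Fin (2*n) → Matrix (Fin (2^n)) (Fin (2^n)) ℂ)
    (ρ : Matrix (Fin (2^n)) (Fin (2^n)) ℂ) : Prop :=
  ∃ (lam : Fin n → ℝ) (R : Matrix (Fin (2*n)) (Fin (2*n)) ℝ),
    (∀ j, lam j ∈ Set.Icc (-1:ℝ) 1) ∧ R * Rᵀ = 1 ∧ R.det = 1 ∧ ρ = gaussOf n c lam R

/-- A pure fermionic Gaussian state: all `λ_j = ±1`. -/
def IsPureGaussianState (n : ℕ) (c : Fin (2*n) → Matrix (Fin (2^n)) (Fin (2^n)) ℂ)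
    (ρ : Matrix (Fin (2^n)) (Fin (2^n)) ℂ) : Prop :=
  ∃ (lam : Fin n → ℝ) (R : Matrix (Fin (2*n)) (Fin (2*n)) ℝ),
    (∀ j, lam j = 1 ∨ lam j = -1) ∧ R * Rᵀ = 1 ∧ R.det = 1 ∧ ρ = gaussOf n c lam R

/-- The largest (real) eigenvalue of a Hermitian matrix. -/
def lamMax {m : Type} [Fintype m] [DecidableEq m] (M : Matrix m m ℂ) : ℝ :=
  sSup {x : ℝ | (x : ℂ) ∈ spectrum ℂ M}

/-!
Since `λ_max(M)` is the largest expectation value of `M` in a state, it is subadditive, which is the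
upper bound. For the lower bound it suffices that `λ_max(H)` dominates both `λ_max(H_class)` and
`λ_max(H_quad) / 2`: add the first inequality to twice the second.

* The normalised projection onto the top eigenspace of `H_class` commutes with every
  `i c_{2j-1} c_{2j}`, because `H_class` does. Each hopping term anticommutes with one of these
  involutions, so its expectation value vanishes, and `H` has energy `λ_max(H_class)` in this
  state.
* In any state, the energy of `H_quad` is a linear function of the symmetric off-diagonal part of
  the covariance matrix `Γ_{jk} = tr(ρ i c_{2j-1} c_{2k})`. Take `Γ` from a top eigenstate of
  `H_quad` and let `S` be its symmetric part and `D` its diagonal. As `S` and `D` have norm at most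
  one, so does `X = (S - D) / 2`, and hence there is a Gaussian state with covariance matrix `X`: in
  an eigenbasis of `X` it is a product over the modes. In this state `H_quad` has half of its
  maximal energy. Since `X` has zero diagonal, the expectation value of `n_j - 1/2` vanishes and, by
  Wick's theorem, that of `1/4 - n_j n_k` is `X_{jk}² / 4 ≥ 0`, so that `H_class` contributes a
  nonnegative energy.
-/

section LargestEigenvalue

open scoped MatrixOrder

variable {m : Type} [Fintype m]

/-- The expectation value `tr(ρM)` of an observable `M` in the state `ρ`, as a linear functional
of `M`. -/
def expectation (ρ : Matrix m m ℂ) : Matrix m m ℂ →ₗ[ℂ] ℂ :=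
  traceLinearMap m ℂ ℂ ∘ₗ LinearMap.mulLeft ℂ ρ

lemma expectation_apply (ρ M : Matrix m m ℂ) : expectation ρ M = trace (ρ * M) :=
  rfl

/-- Density matrices: the quantum states on `ℂ^m`. -/
structure IsDensityMatrix (ρ : Matrix m m ℂ) : Prop where
  posSemidef : ρ.PosSemidef
  trace_eq_one : trace ρ = 1

variable {ρ M N : Matrix m m ℂ}

lemma IsDensityMatrix.re_expectation_nonneg (hρ : IsDensityMatrix ρ) (hM : M.PosSemidef) :
    0 ≤ (expectation ρ M).re := by
  classical
  obtain ⟨C, rfl⟩ := CStarAlgebra.nonneg_iff_eq_star_mul_self.mp hρ.posSemidef.nonneg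
  rw [expectation_apply, mul_assoc, trace_mul_comm]
  exact (Complex.nonneg_iff.mp (hM.mul_mul_conjTranspose_same C).trace_nonneg).1

lemma isDensityMatrix_inv_trace_smul (hM : M.PosSemidef) (hM0 : M ≠ 0) :
    IsDensityMatrix ((trace M)⁻¹ • M) where
  posSemidef := hM.smul (inv_nonneg.mpr hM.trace_nonneg)
  trace_eq_one := by
    rw [trace_smul, smul_eq_mul, inv_mul_cancel₀ (hM.trace_eq_zero_iff.not.mpr hM0)]

variable [DecidableEq m]

lemma IsDensityMatrix.expectation_one (hρ : IsDensityMatrix ρ) : expectation ρ 1 = 1 := by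
  rw [expectation_apply, mul_one, hρ.trace_eq_one]

lemma le_lamMax_of_mem_spectrum {x : ℝ} (hx : x ∈ spectrum ℝ M) : x ≤ lamMax M :=
  le_csSup finite_real_spectrum.bddAbove hx

lemma lamMax_mem_spectrum [Nonempty m] (hM : M.IsHermitian) : lamMax M ∈ spectrum ℝ M :=
  (ContinuousFunctionalCalculus.spectrum_nonempty M hM.isSelfAdjoint).csSup_mem
    finite_real_spectrum

lemma IsDensityMatrix.re_expectation_le_lamMax (hρ : IsDensityMatrix ρ) (hM : M.IsHermitian) :
    (expectation ρ M).re ≤ lamMax M := by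
  have hle : M ≤ algebraMap ℝ _ (lamMax M) :=
    le_algebraMap_of_spectrum_le (fun _ => le_lamMax_of_mem_spectrum) hM.isSelfAdjoint
  have h := hρ.re_expectation_nonneg (Matrix.le_iff.mp hle)
  rw [Algebra.algebraMap_eq_smul_one, ← Complex.coe_smul, map_sub, map_smul,
    hρ.expectation_one] at h
  simpa using h

-- The top eigenprojection is a function of `M`, so it inherits every symmetry of `M`.
lemma exists_isDensityMatrix_expectation_eq_lamMax [Nonempty m] (hM : M.IsHermitian) :
    ∃ ρ, IsDensityMatrix ρ ∧ expectation ρ M = lamMax M ∧ ∀ Z, Commute Z M → Commute Z ρ := by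
  have hM' : IsSelfAdjoint M := hM.isSelfAdjoint
  have hcont (f : ℝ → ℝ) : ContinuousOn f (spectrum ℝ M) := finite_real_spectrum.continuousOn f
  set f : ℝ → ℝ := Pi.single (lamMax M) 1 with hf
  set P : Matrix m m ℂ := cfc f M with hP
  have hPpos : P.PosSemidef := nonneg_iff_posSemidef.mp <|
    cfc_nonneg fun x _ => (Pi.single_nonneg.mpr zero_le_one : (0 : ℝ → ℝ) ≤ f) x
  have hP0 : P ≠ 0 := by
    have h1 : (1 : ℝ) ∈ spectrum ℝ P := by
      rw [hP, cfc_map_spectrum f M hM' (hcont f)]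
      exact ⟨lamMax M, lamMax_mem_spectrum hM, Pi.single_eq_same _ _⟩
    intro h
    simp [h] at h1
  have hPM : P * M = lamMax M • P := by
    calc P * M = cfc (fun x => f x * x) M := by
          rw [cfc_mul f _ M (hcont _) (hcont _), cfc_id' ℝ M]
      _ = cfc (fun x => lamMax M • f x) M := by
          congr 1
          ext x
          rcases eq_or_ne x (lamMax M) with rfl | hx
          · simp [hf]
          · simp [hf, hx]
      _ = lamMax M • P := cfc_smul _ _ _ (hcont _)
  have htr : trace P ≠ 0 := hPpos.trace_eq_zero_iff.not.mpr hP0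
  refine ⟨_, isDensityMatrix_inv_trace_smul hPpos hP0, ?_, fun Z hZ => ?_⟩
  · rw [expectation_apply, smul_mul_assoc, hPM, trace_smul, trace_smul, Complex.real_smul,
      smul_eq_mul, mul_left_comm, inv_mul_cancel₀ htr, mul_one]
  · exact ((hZ.symm.cfc_real f).symm).smul_right _

lemma lamMax_add_le [Nonempty m] (hM : M.IsHermitian) (hN : N.IsHermitian) :
    lamMax (M + N) ≤ lamMax M + lamMax N := by
  obtain ⟨ρ, hρ, hmax, -⟩ := exists_isDensityMatrix_expectation_eq_lamMax (hM.add hN)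
  calc lamMax (M + N) = (expectation ρ M).re + (expectation ρ N).re := by
        rw [← Complex.add_re, ← map_add, hmax, Complex.ofReal_re]
    _ ≤ lamMax M + lamMax N :=
        add_le_add (hρ.re_expectation_le_lamMax hM) (hρ.re_expectation_le_lamMax hN)

lemma trace_mul_eq_zero_of_anticommute {Z T : Matrix m m ℂ} (hZ : Z * Z = 1) (hρ : Commute Z ρ)
    (hT : SemiconjBy Z T (-T)) : trace (ρ * T) = 0 := by
  refine self_eq_neg.mp ?_
  calc trace (ρ * T) = trace (Z * (ρ * T) * Z) := by
        rw [trace_mul_comm (Z * _), ← mul_assoc, hZ, one_mul]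
    _ = trace (-(ρ * T)) := by
        rw [(SemiconjBy.mul_right hρ hT).eq, mul_assoc, hZ, mul_one, mul_neg]
    _ = -trace (ρ * T) := trace_neg _

lemma lamMax_le_lamMax_add_sum_of_anticommute [Nonempty m] {κ : Type*} {s : Finset κ}
    {Z T : κ → Matrix m m ℂ} (hM : M.IsHermitian) (hT : (∑ e ∈ s, T e).IsHermitian)
    (hZ : ∀ e ∈ s, Z e * Z e = 1) (hZM : ∀ e ∈ s, Commute (Z e) M)
    (hZT : ∀ e ∈ s, SemiconjBy (Z e) (T e) (-T e)) :
    lamMax M ≤ lamMax (M + ∑ e ∈ s, T e) := by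
  obtain ⟨ρ, hρ, hmax, hcomm⟩ := exists_isDensityMatrix_expectation_eq_lamMax hM
  have hT0 : expectation ρ (∑ e ∈ s, T e) = 0 := by
    rw [map_sum]
    exact Finset.sum_eq_zero fun e he =>
      trace_mul_eq_zero_of_anticommute (hZ e he) (hcomm _ (hZM e he)) (hZT e he)
  simpa [hmax, hT0] using hρ.re_expectation_le_lamMax (hM.add hT)

lemma posSemidef_one_add_smul_of_involution {Q : Matrix m m ℂ} (hQ : Q.IsHermitian)
    (hQ2 : Q * Q = 1) {s : ℝ} (hs : |s| ≤ 1) : (1 + (s : ℂ) • Q).PosSemidef := by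
  have hs2 : (0 : ℝ) ≤ 1 - s ^ 2 := sub_nonneg.mpr ((sq_le_one_iff_abs_le_one s).mpr hs)
  have hsq : ((s : ℂ) • 1 + Q)ᴴ * ((s : ℂ) • 1 + Q) = ((s : ℂ) ^ 2 + 1) • 1 + (2 * s : ℂ) • Q := by
    simp only [conjTranspose_add, conjTranspose_smul, conjTranspose_one, hQ.eq, Complex.star_def,
      Complex.conj_ofReal, add_mul, mul_add, smul_mul_assoc, mul_smul_comm, one_mul, mul_one, hQ2]
    module
  have hdecomp : 1 + (s : ℂ) • Q =
      (1 / 2 : ℝ) • ((1 - s ^ 2) • 1 + ((s : ℂ) • 1 + Q)ᴴ * ((s : ℂ) • 1 + Q)) := by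
    rw [hsq, ← Complex.coe_smul, ← Complex.coe_smul]
    push_cast
    module
  rw [hdecomp]
  exact ((PosSemidef.one.smul hs2).add (posSemidef_conjTranspose_mul_self _)).smul (by norm_num)

lemma IsDensityMatrix.abs_re_expectation_le_one {Q : Matrix m m ℂ} (hρ : IsDensityMatrix ρ)
    (hQ : Q.IsHermitian) (hQ2 : Q * Q = 1) : |(expectation ρ Q).re| ≤ 1 := by
  have bound (s : ℝ) (hs : |s| ≤ 1) : 0 ≤ 1 + s * (expectation ρ Q).re := by
    simpa [hρ.expectation_one] using
      hρ.re_expectation_nonneg (posSemidef_one_add_smul_of_involution hQ hQ2 hs)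
  have h1 := bound 1 (by simp)
  have h2 := bound (-1) (by simp)
  exact abs_le.mpr ⟨by linarith, by linarith⟩

end LargestEigenvalue

section MajoranaFamilies

variable {m : Type} [Fintype m] [DecidableEq m] {κ : Type*} [DecidableEq κ]

/-- Majorana operators with an arbitrary set `κ` of labels, acting on `ℂ^m`. -/
structure IsMajoranaFamily (c : κ → Matrix m m ℂ) : Prop where
  isHermitian : ∀ x, (c x).IsHermitian
  mul_add_mul : ∀ x y, c x * c y + c y * c x = if x = y then (2 : ℂ) • 1 else 0

/-- The Majorana bilinear `i c_x c_y`, an observable when `x ≠ y`. -/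
def bilinear (c : κ → Matrix m m ℂ) (x y : κ) : Matrix m m ℂ :=
  Complex.I • (c x * c y)

namespace IsMajoranaFamily

variable {c : κ → Matrix m m ℂ} {x y z : κ}

lemma comp (hc : IsMajoranaFamily c) {κ' : Type*} [DecidableEq κ'] {f : κ' → κ}
    (hf : Function.Injective f) : IsMajoranaFamily (c ∘ f) where
  isHermitian x := hc.isHermitian (f x)
  mul_add_mul x y := by simp only [Function.comp_apply, hc.mul_add_mul, hf.eq_iff]

lemma mul_self (hc : IsMajoranaFamily c) (x : κ) : c x * c x = 1 := by
  have h := hc.mul_add_mul x x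
  rw [if_pos rfl, ← two_smul ℂ] at h
  exact smul_right_injective _ two_ne_zero h

lemma anticommute (hc : IsMajoranaFamily c) (hxy : x ≠ y) : SemiconjBy (c x) (c y) (-c y) := by
  have h := hc.mul_add_mul x y
  rw [if_neg hxy] at h
  rw [SemiconjBy, neg_mul]
  exact eq_neg_of_add_eq_zero_left h

lemma isHermitian_bilinear (hc : IsMajoranaFamily c) (hxy : x ≠ y) :
    (bilinear c x y).IsHermitian := by
  rw [IsHermitian, bilinear, conjTranspose_smul, conjTranspose_mul, hc.isHermitian, hc.isHermitian,
    (hc.anticommute hxy).eq, Complex.star_def, Complex.conj_I, neg_mul, smul_neg, neg_smul]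

lemma bilinear_mul_right (hc : IsMajoranaFamily c) (x y : κ) :
    bilinear c x y * c y = Complex.I • c x := by
  rw [bilinear, smul_mul_assoc, mul_assoc, hc.mul_self, mul_one]

lemma left_mul_bilinear (hc : IsMajoranaFamily c) (x y : κ) :
    c x * bilinear c x y = Complex.I • c y := by
  rw [bilinear, mul_smul_comm, ← mul_assoc, hc.mul_self, one_mul]

lemma bilinear_anticommute_right (hc : IsMajoranaFamily c) (hxy : x ≠ y) :
    SemiconjBy (bilinear c x y) (c y) (-c y) := by
  rw [SemiconjBy, hc.bilinear_mul_right, bilinear, neg_mul, mul_smul_comm, ← mul_assoc,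
    (hc.anticommute hxy.symm).eq, neg_mul, neg_mul, mul_assoc, hc.mul_self, mul_one, smul_neg,
    neg_neg]

lemma bilinear_anticommute_left (hc : IsMajoranaFamily c) (hxy : x ≠ y) :
    SemiconjBy (bilinear c x y) (c x) (-c x) := by
  rw [SemiconjBy, neg_mul, hc.left_mul_bilinear, bilinear, smul_mul_assoc, mul_assoc,
    (hc.anticommute hxy.symm).eq, neg_mul, mul_neg, ← mul_assoc, hc.mul_self, one_mul, smul_neg]

lemma commute_bilinear (hc : IsMajoranaFamily c) (hxz : x ≠ z) (hyz : y ≠ z) :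
    Commute (bilinear c x y) (c z) := by
  have hx : SemiconjBy (c x) (-c z) (c z) := by simpa using (hc.anticommute hxz).neg_right
  have h : Commute (c x * c y) (c z) := hx.mul_left (hc.anticommute hyz)
  exact h.smul_left _

lemma right_mul_bilinear (hc : IsMajoranaFamily c) (hxy : x ≠ y) :
    c y * bilinear c x y = -(Complex.I • c x) := by
  rw [← hc.bilinear_mul_right x y, (hc.bilinear_anticommute_right hxy).eq, neg_mul, neg_neg]

lemma bilinear_mul_self (hc : IsMajoranaFamily c) (hxy : x ≠ y) :
    bilinear c x y * bilinear c x y = 1 := by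
  nth_rewrite 1 [bilinear]
  rw [smul_mul_assoc, mul_assoc, hc.right_mul_bilinear hxy, mul_neg, mul_smul_comm, hc.mul_self,
    smul_neg, smul_smul, Complex.I_mul_I, neg_one_smul, neg_neg]

lemma rotate [Fintype κ] (hc : IsMajoranaFamily c) {κ' : Type*} [DecidableEq κ']
    {U : Matrix κ κ' ℝ} (hU : Uᵀ * U = 1) :
    IsMajoranaFamily fun a => ∑ x, (U x a : ℂ) • c x where
  isHermitian a := by
    simp only [IsHermitian, conjTranspose_sum, conjTranspose_smul, (hc.isHermitian _).eq,
      Complex.star_def, Complex.conj_ofReal]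
  mul_add_mul a b := by
    have hab : ∑ x, (U x a : ℂ) * U x b = if a = b then 1 else 0 := by
      have h := congrArg (Complex.ofReal) (congrFun₂ hU a b)
      simpa [mul_apply, one_apply, apply_ite] using h
    calc (∑ x, (U x a : ℂ) • c x) * (∑ x, (U x b : ℂ) • c x)
          + (∑ x, (U x b : ℂ) • c x) * ∑ x, (U x a : ℂ) • c x
        = ∑ x, ∑ y, ((U x a : ℂ) * U y b) • (c x * c y + c y * c x) := by
          rw [Finset.sum_mul_sum, Finset.sum_mul_sum, Finset.sum_comm (s := Finset.univ) (t := _)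
            (f := fun x y => (U x b : ℂ) • c x * (U y a : ℂ) • c y)]
          simp only [smul_mul_smul_comm, smul_add, Finset.sum_add_distrib, mul_comm (U _ b : ℂ)]
      _ = ∑ x, ((U x a : ℂ) * U x b) • (2 : ℂ) • (1 : Matrix m m ℂ) := by
          simp only [hc.mul_add_mul, smul_ite, smul_zero, Finset.sum_ite_eq, Finset.mem_univ,
            if_true]
      _ = if a = b then (2 : ℂ) • 1 else 0 := by
          rw [← Finset.sum_smul, hab, ite_smul, one_smul, zero_smul]

end IsMajoranaFamily

end MajoranaFamilies

section Modes

variable {m : Type} {ι : Type*} {c : ι ⊕ ι → Matrix m m ℂ}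

/-- The Bogoliubov transformation which mixes the operators `c_{2j-1}` by the coefficients `U`, and
the operators `c_{2j}` by the same coefficients. Here and below `ι` labels the modes, and the two
Majorana operators `c_{2j-1}`, `c_{2j}` of the mode `j` have the labels `Sum.inl j`, `Sum.inr j`. -/
def rotateModes [Fintype ι] {κ : Type*} (U : Matrix ι κ ℝ) (c : ι ⊕ ι → Matrix m m ℂ) :
    κ ⊕ κ → Matrix m m ℂ :=
  Sum.elim (fun a => ∑ j, (U j a : ℂ) • c (.inl j)) (fun a => ∑ j, (U j a : ℂ) • c (.inr j))

lemma sum_smul_rotateModes_inr [Fintype ι] [DecidableEq ι] {κ : Type*} [Fintype κ]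
    {U : Matrix ι κ ℝ} (hU : U * Uᵀ = 1) (c : ι ⊕ ι → Matrix m m ℂ) (k : ι) :
    ∑ a, (U k a : ℂ) • rotateModes U c (.inr a) = c (.inr k) := by
  have hrow (j : ι) : ∑ a, (U k a : ℂ) * U j a = if k = j then 1 else 0 := by
    simpa [mul_apply, one_apply, apply_ite] using congrArg Complex.ofReal (congrFun₂ hU k j)
  simp only [rotateModes, Sum.elim_inr, Finset.smul_sum, smul_smul]
  rw [Finset.sum_comm]
  simp only [← Finset.sum_smul, hrow, ite_smul, one_smul, zero_smul, Finset.sum_ite_eq,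
    Finset.mem_univ, if_true]

variable [Fintype m]

/-- The observable `i c_{2j-1} c_{2k}`. -/
abbrev pairing (c : ι ⊕ ι → Matrix m m ℂ) (j k : ι) : Matrix m m ℂ :=
  bilinear c (.inl j) (.inr k)

lemma pairing_rotateModes [Fintype ι] {κ : Type*} (U : Matrix ι κ ℝ) (c : ι ⊕ ι → Matrix m m ℂ)
    (a b : κ) :
    pairing (rotateModes U c) a b = ∑ j, ∑ k, ((U j a : ℂ) * U k b) • pairing c j k := by
  simp only [pairing, bilinear, rotateModes, Sum.elim_inl, Sum.elim_inr, Finset.sum_mul_sum,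
    smul_mul_smul_comm, Finset.smul_sum, smul_comm Complex.I]

variable [DecidableEq m] [DecidableEq ι]

lemma isMajoranaFamily_rotateModes [Fintype ι] (hc : IsMajoranaFamily c) {κ : Type*} [DecidableEq κ]
    {U : Matrix ι κ ℝ} (hU : Uᵀ * U = 1) : IsMajoranaFamily (rotateModes U c) := by
  have hblock : (fromBlocks U 0 0 U)ᵀ * fromBlocks U 0 0 U = 1 := by
    simp only [fromBlocks_transpose, fromBlocks_multiply, transpose_zero, Matrix.mul_zero,
      Matrix.zero_mul, add_zero, zero_add, hU, fromBlocks_one]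
  convert hc.rotate hblock using 1
  ext (a | a) : 1 <;> simp [rotateModes, Fintype.sum_sum_type]

namespace IsMajoranaFamily

variable {j k : ι}

lemma isHermitian_pairing (hc : IsMajoranaFamily c) (j k : ι) : (pairing c j k).IsHermitian :=
  hc.isHermitian_bilinear Sum.inl_ne_inr

lemma pairing_mul_self (hc : IsMajoranaFamily c) (j k : ι) : pairing c j k * pairing c j k = 1 :=
  hc.bilinear_mul_self Sum.inl_ne_inr

lemma commute_pairing_self_inl (hc : IsMajoranaFamily c) (hjk : j ≠ k) :
    Commute (pairing c j j) (c (.inl k)) :=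
  hc.commute_bilinear (Sum.inl_injective.ne hjk) Sum.inr_ne_inl

lemma commute_pairing_self_inr (hc : IsMajoranaFamily c) (hjk : j ≠ k) :
    Commute (pairing c j j) (c (.inr k)) :=
  hc.commute_bilinear Sum.inl_ne_inr (Sum.inr_injective.ne hjk)

lemma commute_pairing_self (hc : IsMajoranaFamily c) (j k : ι) :
    Commute (pairing c j j) (pairing c k k) := by
  rcases eq_or_ne j k with rfl | hjk
  · exact .refl _
  · exact ((hc.commute_pairing_self_inl hjk).mul_right
      (hc.commute_pairing_self_inr hjk)).smul_right _

lemma pairing_self_anticommute_pairing_add (hc : IsMajoranaFamily c) (hjk : j ≠ k) :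
    SemiconjBy (pairing c j j) (pairing c j k + pairing c k j)
      (-(pairing c j k + pairing c k j)) := by
  have hleft : SemiconjBy (pairing c j j) (c (.inl j) * c (.inr k))
      (-(c (.inl j) * c (.inr k))) := by
    simpa using (hc.bilinear_anticommute_left Sum.inl_ne_inr).mul_right
      (hc.commute_pairing_self_inr hjk)
  have hright : SemiconjBy (pairing c j j) (c (.inl k) * c (.inr j))
      (-(c (.inl k) * c (.inr j))) := by
    simpa using SemiconjBy.mul_right (hc.commute_pairing_self_inl hjk)
      (hc.bilinear_anticommute_right Sum.inl_ne_inr)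
  have hsum := (hleft.add_right hright).smul_right Complex.I
  rwa [← neg_add, smul_neg, smul_add] at hsum

lemma commutator_inr_inl (hc : IsMajoranaFamily c) (j k : ι) :
    c (.inr k) * c (.inl j) - c (.inl j) * c (.inr k) = (2 * Complex.I) • pairing c j k := by
  rw [(hc.anticommute Sum.inr_ne_inl).eq, pairing, bilinear, smul_smul, mul_assoc,
    Complex.I_mul_I, neg_mul]
  module

lemma commutator_inr_inl_mul_pairing (hc : IsMajoranaFamily c) (hjk : j ≠ k) :
    c (.inr j) * (c (.inl j) * pairing c k k) - c (.inl j) * pairing c k k * c (.inr j) =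
      (2 * Complex.I) • (pairing c j j * pairing c k k) := by
  rw [mul_assoc, (hc.commute_pairing_self_inr hjk.symm).eq, ← mul_assoc, ← mul_assoc, ← sub_mul,
    hc.commutator_inr_inl, smul_mul_assoc]

lemma anticommutator_inl_inl_mul_pairing (hc : IsMajoranaFamily c) (hjk : j ≠ k)
    (l : ι) :
    c (.inl l) * (c (.inl j) * pairing c k k) + c (.inl j) * pairing c k k * c (.inl l) =
      (if l = j then (2 : ℂ) • pairing c k k else 0) -
        if l = k then (2 : ℂ) • pairing c j k else 0 := by
  rcases eq_or_ne l k with rfl | hlk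
  · rw [if_neg hjk.symm, if_pos rfl, zero_sub, mul_assoc,
      (hc.bilinear_anticommute_left Sum.inl_ne_inr).eq, neg_mul, mul_neg, ← mul_assoc,
      (hc.anticommute (Sum.inl_injective.ne hjk.symm)).eq, neg_mul, neg_mul, mul_assoc,
      hc.left_mul_bilinear, pairing, bilinear, mul_smul_comm]
    module
  · rw [if_neg hlk, sub_zero, mul_assoc, (hc.commute_pairing_self_inl hlk.symm).eq, ← mul_assoc,
      ← mul_assoc, ← add_mul, hc.mul_add_mul, ite_mul, zero_mul, smul_mul_assoc, one_mul]
    simp only [Sum.inl_injective.eq_iff]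

end IsMajoranaFamily

end Modes

section GaussianProducts

open scoped MatrixOrder

variable {m : Type} [Fintype m] {ι : Type*} {c : ι ⊕ ι → Matrix m m ℂ}

/-- The factor `1 + i s_l c_{2l-1} c_{2l}` of a Gaussian state. -/
def gaussianFactor [DecidableEq m] (c : ι ⊕ ι → Matrix m m ℂ) (s : ι → ℝ) (l : ι) : Matrix m m ℂ :=
  1 + (s l : ℂ) • pairing c l l

variable [DecidableEq m] [DecidableEq ι]

namespace IsMajoranaFamily

variable {s : ι → ℝ} {S : Finset ι} {j k l : ι}

lemma commute_gaussianFactor (hc : IsMajoranaFamily c) (s : ι → ℝ) (j k : ι) :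
    Commute (gaussianFactor c s j) (gaussianFactor c s k) :=
  .add_right (.one_right _) <| .smul_right
    (.add_left (.one_left _) ((hc.commute_pairing_self j k).smul_left _)) _

lemma commute_inl_gaussianFactor (hc : IsMajoranaFamily c) (s : ι → ℝ) (hjk : j ≠ k) :
    Commute (c (.inl j)) (gaussianFactor c s k) :=
  .add_right (.one_right _) ((hc.commute_pairing_self_inl hjk.symm).symm.smul_right _)

lemma commute_inr_gaussianFactor (hc : IsMajoranaFamily c) (s : ι → ℝ) (hjk : j ≠ k) :
    Commute (c (.inr j)) (gaussianFactor c s k) :=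
  .add_right (.one_right _) ((hc.commute_pairing_self_inr hjk.symm).symm.smul_right _)

lemma commutator_gaussianFactor (hc : IsMajoranaFamily c) (s : ι → ℝ) (l : ι) :
    gaussianFactor c s l * c (.inr l) - c (.inr l) * gaussianFactor c s l =
      (Complex.I * s l) •
        (c (.inl l) * gaussianFactor c s l + gaussianFactor c s l * c (.inl l)) := by
  have hanti : c (.inl l) * pairing c l l = -(pairing c l l * c (.inl l)) := by
    rw [(hc.bilinear_anticommute_left Sum.inl_ne_inr).eq, neg_mul, neg_neg]
  simp only [gaussianFactor, add_mul, mul_add, one_mul, mul_one, smul_mul_assoc, mul_smul_comm,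
    hc.bilinear_mul_right, hc.right_mul_bilinear Sum.inl_ne_inr, hanti]
  module

/-- The unnormalised Gaussian state `∏ l ∈ S, (1 + i s_l c_{2l-1} c_{2l})`. -/
def gaussianProd (hc : IsMajoranaFamily c) (s : ι → ℝ) (S : Finset ι) : Matrix m m ℂ :=
  S.noncommProd (gaussianFactor c s) fun j _ k _ _ => hc.commute_gaussianFactor s j k

lemma gaussianProd_insert (hc : IsMajoranaFamily c) (s : ι → ℝ) (hl : l ∉ S) :
    hc.gaussianProd s (insert l S) = gaussianFactor c s l * hc.gaussianProd s S :=
  Finset.noncommProd_insert_of_notMem _ _ _ _ hl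

lemma commute_inl_gaussianProd (hc : IsMajoranaFamily c) (s : ι → ℝ) (hl : l ∉ S) :
    Commute (c (.inl l)) (hc.gaussianProd s S) :=
  Finset.noncommProd_commute _ _ _ _ fun _ hk =>
    hc.commute_inl_gaussianFactor s (ne_of_mem_of_not_mem hk hl).symm

lemma commute_inr_gaussianProd (hc : IsMajoranaFamily c) (s : ι → ℝ) (hl : l ∉ S) :
    Commute (c (.inr l)) (hc.gaussianProd s S) :=
  Finset.noncommProd_commute _ _ _ _ fun _ hk =>
    hc.commute_inr_gaussianFactor s (ne_of_mem_of_not_mem hk hl).symm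

lemma posSemidef_gaussianProd (hc : IsMajoranaFamily c) (hs : ∀ l, |s l| ≤ 1) (S : Finset ι) :
    (hc.gaussianProd s S).PosSemidef := by
  induction S using Finset.induction_on with
  | empty => exact PosSemidef.one
  | insert l S hl ih =>
    have hfactor : (gaussianFactor c s l).PosSemidef :=
      posSemidef_one_add_smul_of_involution (hc.isHermitian_pairing l l) (hc.pairing_mul_self l l)
        (hs l)
    have hcomm : Commute (gaussianFactor c s l) (hc.gaussianProd s S) :=
      Finset.noncommProd_commute _ _ _ _ fun k _ => hc.commute_gaussianFactor s l k
    rw [hc.gaussianProd_insert s hl]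
    exact (hcomm.mul_nonneg hfactor.nonneg ih.nonneg).posSemidef

lemma trace_gaussianProd (hc : IsMajoranaFamily c) (s : ι → ℝ) (S : Finset ι) :
    trace (hc.gaussianProd s S) = Fintype.card m := by
  induction S using Finset.induction_on with
  | empty => exact trace_one
  | insert l S hl ih =>
    have hzero : trace (hc.gaussianProd s S * pairing c l l) = 0 := by
      refine trace_mul_eq_zero_of_anticommute (hc.mul_self (.inl l))
        (hc.commute_inl_gaussianProd s hl) ?_
      rw [SemiconjBy, neg_mul, (hc.bilinear_anticommute_left Sum.inl_ne_inr).eq, neg_mul, neg_neg]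
    rw [hc.gaussianProd_insert s hl, gaussianFactor, add_mul, one_mul, smul_mul_assoc, trace_add,
      trace_smul, trace_mul_comm (pairing c l l), hzero, smul_zero, add_zero, ih]

lemma commutator_gaussianProd (hc : IsMajoranaFamily c) (s : ι → ℝ) (hk : k ∈ S) :
    hc.gaussianProd s S * c (.inr k) - c (.inr k) * hc.gaussianProd s S =
      (Complex.I * s k) •
        (c (.inl k) * hc.gaussianProd s S + hc.gaussianProd s S * c (.inl k)) := by
  have hk' : k ∉ S.erase k := Finset.notMem_erase k S
  rw [← Finset.insert_erase hk, hc.gaussianProd_insert s hk', mul_assoc, mul_assoc,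
    ← (hc.commute_inl_gaussianProd s hk').eq, ← (hc.commute_inr_gaussianProd s hk').eq,
    ← mul_assoc, ← mul_assoc, ← mul_assoc, ← mul_assoc, ← sub_mul, ← add_mul,
    hc.commutator_gaussianFactor, smul_mul_assoc]

end IsMajoranaFamily

end GaussianProducts

section WickStates

open scoped MatrixOrder

variable {m : Type} [Fintype m] {ι : Type*} [Fintype ι]

/-- States obeying Wick's theorem for an operator `c_{2k}`, whose contraction with `c_{2j-1}` is
`tr(ρ i c_{2j-1} c_{2k}) = X j k` and whose contraction with every `c_{2j}` vanishes. This is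
encoded by a relation exchanging `ρ` and `c_{2k}`, which fermionic Gaussian states satisfy and
which, unlike their explicit formula, is linear in the Majorana operators. -/
structure IsWickState (c : ι ⊕ ι → Matrix m m ℂ) (X : Matrix ι ι ℝ) (ρ : Matrix m m ℂ) : Prop
    extends IsDensityMatrix ρ where
  commutator_eq : ∀ k, ρ * c (.inr k) - c (.inr k) * ρ =
    Complex.I • ∑ j, (X j k : ℂ) • (c (.inl j) * ρ + ρ * c (.inl j))

variable {c : ι ⊕ ι → Matrix m m ℂ} {X : Matrix ι ι ℝ} {ρ : Matrix m m ℂ}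

lemma IsWickState.expectation_commutator (hρ : IsWickState c X ρ) (k : ι) (M : Matrix m m ℂ) :
    expectation ρ (c (.inr k) * M - M * c (.inr k)) =
      Complex.I * ∑ l, X l k * expectation ρ (c (.inl l) * M + M * c (.inl l)) := by
  have hcomm : expectation ρ (c (.inr k) * M - M * c (.inr k)) =
      trace ((ρ * c (.inr k) - c (.inr k) * ρ) * M) := by
    rw [expectation_apply, mul_sub, sub_mul, trace_sub, trace_sub, ← mul_assoc, ← mul_assoc,
      trace_mul_cycle ρ M]
  have hanti (l : ι) : trace ((c (.inl l) * ρ + ρ * c (.inl l)) * M) =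
      expectation ρ (c (.inl l) * M + M * c (.inl l)) := by
    rw [expectation_apply, mul_add, add_mul, trace_add, trace_add, ← mul_assoc, ← mul_assoc,
      trace_mul_cycle ρ M, add_comm]
  simp only [hcomm, hρ.commutator_eq, smul_mul_assoc, trace_smul, smul_eq_mul, Finset.sum_mul,
    trace_sum, hanti]

lemma IsWickState.of_rotateModes [DecidableEq ι] {κ : Type*} [Fintype κ]
    {U : Matrix ι κ ℝ} (hU : U * Uᵀ = 1) {Y : Matrix κ κ ℝ}
    (hρ : IsWickState (rotateModes U c) Y ρ) :
    IsWickState c (U * Y * Uᵀ) ρ where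
  toIsDensityMatrix := hρ.toIsDensityMatrix
  commutator_eq k := by
    have hanti (b : κ) : rotateModes U c (.inl b) * ρ + ρ * rotateModes U c (.inl b) =
        ∑ j, (U j b : ℂ) • (c (.inl j) * ρ + ρ * c (.inl j)) := by
      simp only [rotateModes, Sum.elim_inl, Finset.sum_mul, Finset.mul_sum, smul_mul_assoc,
        mul_smul_comm, smul_add, Finset.sum_add_distrib]
    have hentry (j : ι) : ((U * Y * Uᵀ) j k : ℂ) = ∑ a, ∑ b, (U k a : ℂ) * Y b a * U j b := by
      simp only [mul_apply, transpose_apply, Finset.sum_mul, Complex.ofReal_sum,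
        Complex.ofReal_mul]
      exact Finset.sum_congr rfl fun a _ => Finset.sum_congr rfl fun b _ => by ring
    calc ρ * c (.inr k) - c (.inr k) * ρ
        = ∑ a, (U k a : ℂ) •
            (ρ * rotateModes U c (.inr a) - rotateModes U c (.inr a) * ρ) := by
          simp only [← sum_smul_rotateModes_inr hU c k, Finset.mul_sum, Finset.sum_mul,
            mul_smul_comm, smul_mul_assoc, smul_sub, Finset.sum_sub_distrib]
      _ = Complex.I • ∑ a, ∑ b, ∑ j, ((U k a : ℂ) * Y b a * U j b) •
            (c (.inl j) * ρ + ρ * c (.inl j)) := by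
          simp only [hρ.commutator_eq, hanti, Finset.smul_sum, smul_smul]
          refine Finset.sum_congr rfl fun a _ => Finset.sum_congr rfl fun b _ =>
            Finset.sum_congr rfl fun j _ => ?_
          congr 1
          ring
      _ = Complex.I • ∑ j, ((U * Y * Uᵀ) j k : ℂ) • (c (.inl j) * ρ + ρ * c (.inl j)) := by
          simp only [hentry, Finset.sum_smul]
          rw [Finset.sum_comm (s := Finset.univ (α := ι))]
          exact congrArg _ <| Finset.sum_congr rfl fun a _ => Finset.sum_comm

variable [DecidableEq m] [DecidableEq ι]

lemma IsWickState.expectation_pairing (hρ : IsWickState c X ρ) (hc : IsMajoranaFamily c)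
    (j k : ι) : expectation ρ (pairing c j k) = X j k := by
  have hwick := hρ.expectation_commutator k (c (.inl j))
  simp only [hc.commutator_inr_inl, hc.mul_add_mul, Sum.inl_injective.eq_iff,
    apply_ite (expectation ρ), map_smul, map_zero, hρ.expectation_one, smul_eq_mul, mul_one,
    mul_ite, mul_zero, Finset.sum_ite_eq', Finset.mem_univ, if_true] at hwick
  have hI : 2 * Complex.I ≠ 0 := mul_ne_zero two_ne_zero Complex.I_ne_zero
  refine mul_left_cancel₀ hI (hwick.trans ?_)
  ring

lemma IsWickState.expectation_pairing_mul_pairing (hρ : IsWickState c X ρ)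
    (hc : IsMajoranaFamily c) {j k : ι} (hjk : j ≠ k) :
    expectation ρ (pairing c j j * pairing c k k) = X j j * X k k - X j k * X k j := by
  have hwick := hρ.expectation_commutator j (c (.inl j) * pairing c k k)
  simp only [hc.commutator_inr_inl_mul_pairing hjk, hc.anticommutator_inl_inl_mul_pairing hjk,
    map_sub, map_smul, apply_ite (expectation ρ), map_zero, hρ.expectation_pairing hc,
    smul_eq_mul, mul_sub, mul_ite, mul_zero, Finset.sum_sub_distrib, Finset.sum_ite_eq',
    Finset.mem_univ, if_true] at hwick
  have hI : 2 * Complex.I ≠ 0 := mul_ne_zero two_ne_zero Complex.I_ne_zero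
  refine mul_left_cancel₀ hI (hwick.trans ?_)
  ring

lemma IsMajoranaFamily.exists_isWickState_diagonal [Nonempty m] (hc : IsMajoranaFamily c)
    {s : ι → ℝ} (hs : ∀ l, |s l| ≤ 1) : ∃ ρ, IsWickState c (diagonal s) ρ := by
  have hP0 : hc.gaussianProd s Finset.univ ≠ 0 := by
    intro h
    have htr := hc.trace_gaussianProd s Finset.univ
    rw [h, trace_zero] at htr
    exact Fintype.card_ne_zero (Nat.cast_eq_zero.mp htr.symm)
  refine ⟨_, isDensityMatrix_inv_trace_smul (hc.posSemidef_gaussianProd hs Finset.univ) hP0,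
    fun k => ?_⟩
  have hsum (f : ι → Matrix m m ℂ) :
      ∑ j, ((diagonal s : Matrix ι ι ℝ) j k : ℂ) • f j = (s k : ℂ) • f k := by
    rw [Finset.sum_eq_single_of_mem k (Finset.mem_univ k), diagonal_apply_eq]
    intro j _ hjk
    rw [diagonal_apply_ne _ hjk, Complex.ofReal_zero, zero_smul]
  rw [hsum, smul_mul_assoc, mul_smul_comm, mul_smul_comm, smul_mul_assoc, ← smul_sub, ← smul_add,
    hc.commutator_gaussianProd s (Finset.mem_univ k)]
  module

end WickStates

section HalfOffDiagonal

variable {ι : Type*} [DecidableEq ι]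

/-- Half of the symmetric off-diagonal part of a matrix. -/
def halfOffDiag (X : Matrix ι ι ℝ) : Matrix ι ι ℝ :=
  (1 / 2 : ℝ) • ((1 / 2 : ℝ) • (X + Xᵀ) - diagonal X.diag)

lemma isSymm_halfOffDiag (X : Matrix ι ι ℝ) : (halfOffDiag X).IsSymm :=
  (((isSymm_add_transpose_self X).smul _).sub (isSymm_diagonal _)).smul _

lemma halfOffDiag_apply_self (X : Matrix ι ι ℝ) (i : ι) : halfOffDiag X i i = 0 := by
  simp only [halfOffDiag, Matrix.smul_apply, Matrix.sub_apply, Matrix.add_apply, transpose_apply,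
    diagonal_apply_eq, diag_apply, smul_eq_mul]
  ring

lemma halfOffDiag_apply_of_ne (X : Matrix ι ι ℝ) {i j : ι} (hij : i ≠ j) :
    halfOffDiag X i j = (X i j + X j i) / 4 := by
  simp only [halfOffDiag, Matrix.smul_apply, Matrix.sub_apply, Matrix.add_apply, transpose_apply,
    diagonal_apply_ne _ hij, smul_eq_mul]
  ring

end HalfOffDiagonal

section NumericalContractions

variable {ι : Type*} [Fintype ι]

/-- Real matrices whose quadratic form is bounded by `1` in absolute value on the unit sphere; for
symmetric matrices this says that all eigenvalues lie in `[-1, 1]`. -/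
def IsNumericalContraction (X : Matrix ι ι ℝ) : Prop :=
  ∀ u : ι → ℝ, u ⬝ᵥ u = 1 → |u ⬝ᵥ X *ᵥ u| ≤ 1

variable {X : Matrix ι ι ℝ}

lemma IsNumericalContraction.abs_diag_le_one (hX : IsNumericalContraction X) (i : ι) :
    |X.diag i| ≤ 1 := by
  classical
  simpa using hX (Pi.single i 1) (by simp)

variable [DecidableEq ι]

lemma isNumericalContraction_diagonal {d : ι → ℝ} (hd : ∀ i, |d i| ≤ 1) :
    IsNumericalContraction (diagonal d) := by
  intro u hu
  calc |u ⬝ᵥ diagonal d *ᵥ u| = |∑ i, u i * u i * d i| := by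
        simp only [dotProduct, mulVec_diagonal, mul_assoc, mul_comm (u _) (d _)]
    _ ≤ ∑ i, u i * u i * |d i| := by
        refine (Finset.abs_sum_le_sum_abs _ _).trans_eq ?_
        simp only [abs_mul, abs_mul_abs_self]
    _ ≤ ∑ i, u i * u i := Finset.sum_le_sum fun i _ =>
        mul_le_of_le_one_right (mul_self_nonneg _) (hd i)
    _ = 1 := hu

lemma isNumericalContraction_halfOffDiag (hX : IsNumericalContraction X) :
    IsNumericalContraction (halfOffDiag X) := by
  intro u hu
  have htranspose : u ⬝ᵥ Xᵀ *ᵥ u = u ⬝ᵥ X *ᵥ u := by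
    rw [mulVec_transpose, dotProduct_comm, dotProduct_mulVec]
  have hform : u ⬝ᵥ halfOffDiag X *ᵥ u =
      (u ⬝ᵥ X *ᵥ u - u ⬝ᵥ diagonal X.diag *ᵥ u) / 2 := by
    simp only [halfOffDiag, smul_mulVec, sub_mulVec, add_mulVec, dotProduct_smul,
      dotProduct_sub, dotProduct_add, htranspose, smul_eq_mul]
    ring
  have hdiag : IsNumericalContraction (diagonal X.diag) :=
    isNumericalContraction_diagonal hX.abs_diag_le_one
  have hsub := abs_sub (u ⬝ᵥ X *ᵥ u) (u ⬝ᵥ diagonal X.diag *ᵥ u)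
  rw [hform, abs_div, abs_two]
  linarith [hX u hu, hdiag u hu]

lemma IsNumericalContraction.exists_orthogonal_diagonalization (hX : IsNumericalContraction X)
    (hsymm : X.IsSymm) : ∃ (U : Matrix ι ι ℝ) (s : ι → ℝ),
      Uᵀ * U = 1 ∧ U * Uᵀ = 1 ∧ (∀ l, |s l| ≤ 1) ∧ X = U * diagonal s * Uᵀ := by
  have hherm : X.IsHermitian := by rwa [IsHermitian, conjTranspose_eq_transpose_of_trivial]
  set U : Matrix ι ι ℝ := hherm.eigenvectorUnitary.val
  have hstar : star U = Uᵀ := conjTranspose_eq_transpose_of_trivial U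
  have hU1 : Uᵀ * U = 1 := hstar ▸ Unitary.coe_star_mul_self hherm.eigenvectorUnitary
  have hU2 : U * Uᵀ = 1 := hstar ▸ Unitary.coe_mul_star_self hherm.eigenvectorUnitary
  have hXU : X = U * diagonal hherm.eigenvalues * Uᵀ := by
    have h := hherm.spectral_theorem
    rwa [Unitary.conjStarAlgAut_apply, hstar] at h
  have hdiag : Uᵀ * X * U = diagonal hherm.eigenvalues := by
    nth_rewrite 1 [hXU]
    simp only [← mul_assoc, hU1, one_mul]
    rw [mul_assoc, hU1, mul_one]
  refine ⟨U, hherm.eigenvalues, hU1, hU2, fun l => ?_, hXU⟩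
  have hunit : Uᵀ l ⬝ᵥ Uᵀ l = 1 := (congrFun₂ hU1 l l).trans (one_apply_eq l)
  have hval : Uᵀ l ⬝ᵥ X *ᵥ Uᵀ l = hherm.eigenvalues l := by
    have h := congrFun₂ hdiag l l
    rw [diagonal_apply_eq] at h
    rw [← h, mul_assoc]
    rfl
  exact hval ▸ hX _ hunit

end NumericalContractions

section Covariances

variable {m : Type} [Fintype m] {ι : Type*} {c : ι ⊕ ι → Matrix m m ℂ} {X : Matrix ι ι ℝ}
  {ρ : Matrix m m ℂ}

/-- The block `tr(ρ i c_{2j-1} c_{2k})` of the covariance matrix of the state `ρ`. -/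
def covariance (c : ι ⊕ ι → Matrix m m ℂ) (ρ : Matrix m m ℂ) : Matrix ι ι ℝ :=
  of fun j k => (expectation ρ (pairing c j k)).re

variable [Fintype ι] [DecidableEq m] [DecidableEq ι]

lemma IsWickState.covariance_eq (hρ : IsWickState c X ρ) (hc : IsMajoranaFamily c) :
    covariance c ρ = X := by
  ext j k
  rw [covariance, of_apply, hρ.expectation_pairing hc, Complex.ofReal_re]

lemma IsDensityMatrix.isNumericalContraction_covariance (hρ : IsDensityMatrix ρ)
    (hc : IsMajoranaFamily c) : IsNumericalContraction (covariance c ρ) := by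
  intro u hu
  set U : Matrix ι Unit ℝ := replicateCol Unit u
  have hU : Uᵀ * U = 1 := by
    ext
    exact hu
  have hQ := isMajoranaFamily_rotateModes hc hU
  have hform : u ⬝ᵥ covariance c ρ *ᵥ u = (expectation ρ (pairing (rotateModes U c) () ())).re := by
    simp only [pairing_rotateModes, map_sum, map_smul, Complex.re_sum, smul_eq_mul,
      ← Complex.ofReal_mul, Complex.re_ofReal_mul, dotProduct, mulVec, covariance, of_apply,
      Finset.mul_sum, U, replicateCol_apply]
    exact Finset.sum_congr rfl fun j _ => Finset.sum_congr rfl fun k _ => by ring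
  rw [hform]
  exact hρ.abs_re_expectation_le_one (hQ.isHermitian_pairing _ _) (hQ.pairing_mul_self _ _)

lemma IsMajoranaFamily.exists_isWickState [Nonempty m] (hc : IsMajoranaFamily c)
    (hX : IsNumericalContraction X) (hsymm : X.IsSymm) : ∃ ρ, IsWickState c X ρ := by
  obtain ⟨U, s, hU, hU', hs, rfl⟩ := hX.exists_orthogonal_diagonalization hsymm
  obtain ⟨ρ, hρ⟩ := (isMajoranaFamily_rotateModes hc hU).exists_isWickState_diagonal hs
  exact ⟨ρ, hρ.of_rotateModes hU'⟩

end Covariances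

section Hamiltonians

variable {m : Type} {ι : Type*}

/-- The annihilation operator `a_j = (c_{2j-1} + i c_{2j}) / 2`. -/
def annihilation (c : ι ⊕ ι → Matrix m m ℂ) (j : ι) : Matrix m m ℂ :=
  ((1 : ℂ) / 2) • (c (.inl j) + Complex.I • c (.inr j))

variable [Fintype m]

/-- The number operator `n_j = a_j† a_j`. -/
def number (c : ι ⊕ ι → Matrix m m ℂ) (j : ι) : Matrix m m ℂ :=
  (annihilation c j)ᴴ * annihilation c j

/-- The hopping term `-a_j† a_k - a_k† a_j`. -/
def hopping (c : ι ⊕ ι → Matrix m m ℂ) (j k : ι) : Matrix m m ℂ :=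
  -((annihilation c j)ᴴ * annihilation c k) - (annihilation c k)ᴴ * annihilation c j

/-- The quadratic part `∑ w'_{jk} (-a_j† a_k - a_k† a_j)` of the Hamiltonian. -/
def quadraticHamiltonian (c : ι ⊕ ι → Matrix m m ℂ) (E' : Finset (ι × ι)) (w' : ι × ι → ℝ) :
    Matrix m m ℂ :=
  ∑ e ∈ E', (w' e : ℂ) • hopping c e.1 e.2

variable {c : ι ⊕ ι → Matrix m m ℂ} {ρ : Matrix m m ℂ} {E E' : Finset (ι × ι)} {w : ι × ι → ℝ}
  {μ : ι → ℝ} {j k : ι}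

lemma isHermitian_number (c : ι ⊕ ι → Matrix m m ℂ) (j : ι) : (number c j).IsHermitian :=
  isHermitian_conjTranspose_mul_self _

lemma isHermitian_hopping (c : ι ⊕ ι → Matrix m m ℂ) (j k : ι) : (hopping c j k).IsHermitian := by
  rw [IsHermitian, hopping, conjTranspose_sub, conjTranspose_neg, conjTranspose_mul,
    conjTranspose_mul, conjTranspose_conjTranspose, conjTranspose_conjTranspose, sub_eq_add_neg,
    sub_eq_add_neg, add_comm]

lemma isHermitian_quadraticHamiltonian (c : ι ⊕ ι → Matrix m m ℂ) (E' : Finset (ι × ι))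
    (w' : ι × ι → ℝ) : (quadraticHamiltonian c E' w').IsHermitian :=
  isSelfAdjoint_sum _ fun e _ => (isHermitian_hopping c e.1 e.2).smul (Complex.conj_ofReal _)

variable [DecidableEq m] [DecidableEq ι]

namespace IsMajoranaFamily

lemma conjTranspose_annihilation_mul (hc : IsMajoranaFamily c) (j k : ι) :
    (annihilation c j)ᴴ * annihilation c k =
      ((1 : ℂ) / 4) • (c (.inl j) * c (.inl k) + c (.inr j) * c (.inr k)) +
        ((1 : ℂ) / 4) • (pairing c j k + pairing c k j) := by
  have hswap : c (.inr j) * c (.inl k) = -(c (.inl k) * c (.inr j)) := by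
    rw [(hc.anticommute Sum.inr_ne_inl).eq, neg_mul]
  simp only [annihilation, conjTranspose_smul, conjTranspose_add, (hc.isHermitian _).eq,
    Complex.star_def, map_div₀, map_one, map_ofNat, Complex.conj_I, add_mul, mul_add,
    smul_mul_assoc, mul_smul_comm, hswap, pairing, bilinear]
  linear_combination (norm := module)
    (-(1 : ℂ) / 4) • congrArg (· • (c (.inr j) * c (.inr k))) Complex.I_mul_I

lemma number_eq (hc : IsMajoranaFamily c) (j : ι) :
    number c j = ((1 : ℂ) / 2) • (1 + pairing c j j) := by
  rw [number, hc.conjTranspose_annihilation_mul, hc.mul_self, hc.mul_self]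
  module

lemma hopping_eq (hc : IsMajoranaFamily c) (hjk : j ≠ k) :
    hopping c j k = (-(1 : ℂ) / 2) • (pairing c j k + pairing c k j) := by
  have hinl : c (.inl k) * c (.inl j) = -(c (.inl j) * c (.inl k)) := by
    rw [(hc.anticommute (Sum.inl_injective.ne hjk.symm)).eq, neg_mul]
  have hinr : c (.inr k) * c (.inr j) = -(c (.inr j) * c (.inr k)) := by
    rw [(hc.anticommute (Sum.inr_injective.ne hjk.symm)).eq, neg_mul]
  rw [hopping, hc.conjTranspose_annihilation_mul, hc.conjTranspose_annihilation_mul, hinl, hinr]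
  module

lemma commute_pairing_number (hc : IsMajoranaFamily c) (j k : ι) :
    Commute (pairing c j j) (number c k) := by
  rw [hc.number_eq]
  exact .smul_right (.add_right (.one_right _) (hc.commute_pairing_self j k)) _

lemma commute_number (hc : IsMajoranaFamily c) (j k : ι) : Commute (number c j) (number c k) := by
  rw [hc.number_eq j]
  exact .smul_left (.add_left (.one_left _) (hc.commute_pairing_number j k)) _

lemma pairing_anticommute_hopping (hc : IsMajoranaFamily c) (hjk : j ≠ k) :
    SemiconjBy (pairing c j j) (hopping c j k) (-hopping c j k) := by
  rw [hc.hopping_eq hjk, ← smul_neg]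
  exact (hc.pairing_self_anticommute_pairing_add hjk).smul_right _

lemma re_expectation_quadraticHamiltonian (hc : IsMajoranaFamily c)
    (hE' : ∀ e ∈ E', e.1 ≠ e.2) (w' : ι × ι → ℝ) (ρ : Matrix m m ℂ) :
    (expectation ρ (quadraticHamiltonian c E' w')).re =
      ∑ e ∈ E', w' e * (-(covariance c ρ e.1 e.2 + covariance c ρ e.2 e.1) / 2) := by
  rw [quadraticHamiltonian, map_sum, Complex.re_sum]
  refine Finset.sum_congr rfl fun e he => ?_
  have hhalf : (-(1 : ℂ) / 2) = ((-1 / 2 : ℝ) : ℂ) := by push_cast; rfl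
  rw [hc.hopping_eq (hE' e he), hhalf, map_smul, map_smul, map_add, smul_eq_mul, smul_eq_mul,
    Complex.re_ofReal_mul, Complex.re_ofReal_mul, Complex.add_re, covariance, of_apply, of_apply]
  ring

end IsMajoranaFamily

lemma IsWickState.expectation_number [Fintype ι] {X : Matrix ι ι ℝ} (hρ : IsWickState c X ρ)
    (hc : IsMajoranaFamily c) (j : ι) : expectation ρ (number c j) = (1 + X j j) / 2 := by
  rw [hc.number_eq, map_smul, map_add, hρ.expectation_one, hρ.expectation_pairing hc, smul_eq_mul]
  ring

lemma IsWickState.expectation_number_mul_number [Fintype ι] {X : Matrix ι ι ℝ}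
    (hρ : IsWickState c X ρ) (hc : IsMajoranaFamily c) (hjk : j ≠ k) :
    expectation ρ (number c j * number c k) =
      ((1 + X j j) * (1 + X k k) - X j k * X k j) / 4 := by
  simp only [hc.number_eq, smul_mul_smul_comm, add_mul, mul_add, one_mul, mul_one, map_smul,
    map_add, hρ.expectation_one, hρ.expectation_pairing hc,
    hρ.expectation_pairing_mul_pairing hc hjk, smul_eq_mul]
  ring

variable [Fintype ι]

/-- The classical part `∑ w_{jk} (1/4 - n_j n_k) + ∑ μ_j (n_j - 1/2)` of the Hamiltonian. -/
def classicalHamiltonian (c : ι ⊕ ι → Matrix m m ℂ) (E : Finset (ι × ι)) (w : ι × ι → ℝ)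
    (μ : ι → ℝ) : Matrix m m ℂ :=
  ∑ e ∈ E, (w e : ℂ) • (((1 : ℂ) / 4) • 1 - number c e.1 * number c e.2)
    + ∑ j, (μ j : ℂ) • (number c j - ((1 : ℂ) / 2) • 1)

lemma IsMajoranaFamily.isHermitian_classicalHamiltonian (hc : IsMajoranaFamily c)
    (E : Finset (ι × ι)) (w : ι × ι → ℝ) (μ : ι → ℝ) :
    (classicalHamiltonian c E w μ).IsHermitian := by
  have hscalar (a : ℂ) (ha : IsSelfAdjoint a) : (a • (1 : Matrix m m ℂ)).IsHermitian :=
    isHermitian_one.smul ha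
  refine .add (isSelfAdjoint_sum _ fun e _ => .smul (Complex.conj_ofReal _) (.sub ?_ ?_))
    (isSelfAdjoint_sum _ fun k _ => .smul (Complex.conj_ofReal _) (.sub ?_ ?_))
  · exact hscalar _ (by simp [IsSelfAdjoint])
  · exact ((isHermitian_number c _).commute_iff (isHermitian_number c _)).mp (hc.commute_number _ _)
  · exact isHermitian_number c k
  · exact hscalar _ (by simp [IsSelfAdjoint])

lemma IsMajoranaFamily.commute_pairing_classicalHamiltonian (hc : IsMajoranaFamily c) (j : ι) :
    Commute (pairing c j j) (classicalHamiltonian c E w μ) := by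
  refine .add_right (.sum_right _ _ _ fun e _ => .smul_right (.sub_right ?_ ?_) _)
    (.sum_right _ _ _ fun k _ => .smul_right (.sub_right ?_ ?_) _)
  · exact (Commute.one_right _).smul_right _
  · exact (hc.commute_pairing_number _ _).mul_right (hc.commute_pairing_number _ _)
  · exact hc.commute_pairing_number _ _
  · exact (Commute.one_right _).smul_right _

lemma IsWickState.re_expectation_classicalHamiltonian_nonneg {X : Matrix ι ι ℝ}
    (hρ : IsWickState c X ρ) (hc : IsMajoranaFamily c) (hsymm : X.IsSymm) (hdiag : ∀ j, X j j = 0)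
    (hE : ∀ e ∈ E, e.1 ≠ e.2) (hw : ∀ e ∈ E, 0 ≤ w e) (μ : ι → ℝ) :
    0 ≤ (expectation ρ (classicalHamiltonian c E w μ)).re := by
  have hclassical : expectation ρ (classicalHamiltonian c E w μ) =
      ((∑ e ∈ E, w e * (X e.1 e.2 ^ 2 / 4) : ℝ) : ℂ) := by
    rw [classicalHamiltonian, map_add, map_sum, map_sum, Complex.ofReal_sum]
    have hedge : ∀ e ∈ E, expectation ρ ((w e : ℂ) •
        (((1 : ℂ) / 4) • 1 - number c e.1 * number c e.2)) = (w e * (X e.1 e.2 ^ 2 / 4) : ℝ) := by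
      intro e he
      rw [map_smul, map_sub, map_smul, hρ.expectation_one,
        hρ.expectation_number_mul_number hc (hE e he), hdiag, hdiag, hsymm.apply]
      push_cast
      rw [smul_eq_mul, smul_eq_mul]
      ring
    have hsite (j : ι) : expectation ρ ((μ j : ℂ) • (number c j - ((1 : ℂ) / 2) • 1)) = 0 := by
      rw [map_smul, map_sub, map_smul, hρ.expectation_one, hρ.expectation_number hc, hdiag]
      simp
    rw [Finset.sum_congr rfl hedge, Finset.sum_eq_zero fun j _ => hsite j, add_zero]
  rw [hclassical, Complex.ofReal_re]
  exact Finset.sum_nonneg fun e he => mul_nonneg (hw e he) (by positivity)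

section Bounds

variable [Nonempty m]

lemma IsMajoranaFamily.lamMax_classicalHamiltonian_le (hc : IsMajoranaFamily c)
    (E : Finset (ι × ι)) (w : ι × ι → ℝ) (hE' : ∀ e ∈ E', e.1 ≠ e.2) (w' : ι × ι → ℝ) (μ : ι → ℝ) :
    lamMax (classicalHamiltonian c E w μ) ≤
      lamMax (classicalHamiltonian c E w μ + quadraticHamiltonian c E' w') := by
  have hhop : ∀ e ∈ E', SemiconjBy (pairing c e.1 e.1) ((w' e : ℂ) • hopping c e.1 e.2)
      (-((w' e : ℂ) • hopping c e.1 e.2)) := fun e he => by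
    rw [← smul_neg]
    exact (hc.pairing_anticommute_hopping (hE' e he)).smul_right _
  exact lamMax_le_lamMax_add_sum_of_anticommute (hc.isHermitian_classicalHamiltonian E w μ)
    (isHermitian_quadraticHamiltonian c E' w') (fun e _ => hc.pairing_mul_self e.1 e.1)
    (fun e _ => hc.commute_pairing_classicalHamiltonian e.1) hhop

lemma IsMajoranaFamily.exists_isWickState_half_quadraticHamiltonian (hc : IsMajoranaFamily c)
    (hρ : IsDensityMatrix ρ) (hE' : ∀ e ∈ E', e.1 ≠ e.2) (w' : ι × ι → ℝ) :
    ∃ (X : Matrix ι ι ℝ) (σ : Matrix m m ℂ), IsWickState c X σ ∧ X.IsSymm ∧ (∀ j, X j j = 0) ∧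
      (expectation σ (quadraticHamiltonian c E' w')).re =
        (expectation ρ (quadraticHamiltonian c E' w')).re / 2 := by
  have hsymm := isSymm_halfOffDiag (covariance c ρ)
  obtain ⟨σ, hσ⟩ := hc.exists_isWickState
    (isNumericalContraction_halfOffDiag (hρ.isNumericalContraction_covariance hc)) hsymm
  refine ⟨_, σ, hσ, hsymm, halfOffDiag_apply_self _, ?_⟩
  rw [hc.re_expectation_quadraticHamiltonian hE', hc.re_expectation_quadraticHamiltonian hE',
    hσ.covariance_eq hc, Finset.sum_div]
  refine Finset.sum_congr rfl fun e he => ?_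
  rw [halfOffDiag_apply_of_ne _ (hE' e he), halfOffDiag_apply_of_ne _ (hE' e he).symm]
  ring

lemma IsMajoranaFamily.half_lamMax_quadraticHamiltonian_le (hc : IsMajoranaFamily c)
    (hE : ∀ e ∈ E, e.1 ≠ e.2) (hE' : ∀ e ∈ E', e.1 ≠ e.2) (hw : ∀ e ∈ E, 0 ≤ w e)
    (w' : ι × ι → ℝ) (μ : ι → ℝ) :
    lamMax (quadraticHamiltonian c E' w') / 2 ≤
      lamMax (classicalHamiltonian c E w μ + quadraticHamiltonian c E' w') := by
  have hquad := isHermitian_quadraticHamiltonian c E' w'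
  obtain ⟨ρ, hρ, hmax, -⟩ := exists_isDensityMatrix_expectation_eq_lamMax hquad
  obtain ⟨X, σ, hσ, hsymm, hdiag, hhalf⟩ :=
    hc.exists_isWickState_half_quadraticHamiltonian hρ hE' w'
  calc lamMax (quadraticHamiltonian c E' w') / 2
      = (expectation σ (quadraticHamiltonian c E' w')).re := by
        rw [hhalf, hmax, Complex.ofReal_re]
    _ ≤ (expectation σ (classicalHamiltonian c E w μ)).re +
          (expectation σ (quadraticHamiltonian c E' w')).re :=
        le_add_of_nonneg_left
          (hσ.re_expectation_classicalHamiltonian_nonneg hc hsymm hdiag hE hw μ)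
    _ = (expectation σ (classicalHamiltonian c E w μ + quadraticHamiltonian c E' w')).re := by
        rw [map_add, Complex.add_re]
    _ ≤ lamMax (classicalHamiltonian c E w μ + quadraticHamiltonian c E' w') :=
        hσ.re_expectation_le_lamMax ((hc.isHermitian_classicalHamiltonian E w μ).add hquad)

end Bounds

end Hamiltonians

theorem traceless_CIFH_lamMax_bounds_general {ι : Type*} [Fintype ι] [DecidableEq ι] {m : Type}
    [Fintype m] [DecidableEq m] [Nonempty m] {c : ι ⊕ ι → Matrix m m ℂ} (hc : IsMajoranaFamily c)
    {E E' : Finset (ι × ι)} (hE : ∀ e ∈ E, e.1 ≠ e.2) (hE' : ∀ e ∈ E', e.1 ≠ e.2)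
    {w : ι × ι → ℝ} (hw : ∀ e ∈ E, 0 ≤ w e) (w' : ι × ι → ℝ) (μ : ι → ℝ) :
    (lamMax (classicalHamiltonian c E w μ) + lamMax (quadraticHamiltonian c E' w')) / 3 ≤
        lamMax (classicalHamiltonian c E w μ + quadraticHamiltonian c E' w') ∧
      lamMax (classicalHamiltonian c E w μ + quadraticHamiltonian c E' w') ≤
        lamMax (classicalHamiltonian c E w μ) + lamMax (quadraticHamiltonian c E' w') := by
  have hclass := hc.lamMax_classicalHamiltonian_le E w hE' w' μ
  have hquad := hc.half_lamMax_quadraticHamiltonian_le hE hE' hw w' μ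
  exact ⟨by linarith, lamMax_add_le (hc.isHermitian_classicalHamiltonian E w μ)
    (isHermitian_quadraticHamiltonian c E' w')⟩

section ModeIndexing

variable {n : ℕ} {c : Fin (2 * n) → Matrix (Fin (2 ^ n)) (Fin (2 ^ n)) ℂ}

/-- The correspondence between the labels `0, …, 2n - 1` of the Majorana operators and `n` modes:
the mode `j` owns the operators `2j` and `2j + 1`. -/
def modeIndex (n : ℕ) : Fin n ⊕ Fin n → Fin (2 * n) :=
  Sum.elim (fun j => ⟨2 * j, by omega⟩) (fun j => ⟨2 * j + 1, by omega⟩)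

lemma modeIndex_injective (n : ℕ) : Function.Injective (modeIndex n) := by
  rintro (j | j) (k | k) h <;> simp only [modeIndex, Sum.elim_inl, Sum.elim_inr, Fin.mk.injEq] at h
  · exact congrArg _ (Fin.ext (by omega))
  · omega
  · omega
  · exact congrArg _ (Fin.ext (by omega))

lemma IsMajorana.isMajoranaFamily_comp_modeIndex (hc : IsMajorana n c) :
    IsMajoranaFamily (c ∘ modeIndex n) :=
  IsMajoranaFamily.comp ⟨hc.1, hc.2⟩ (modeIndex_injective n)

end ModeIndexing

/-- For `H = H_class + H_quad` a traceless classically interacting fermionic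
Hamiltonian, `(λ_max(H_class) + λ_max(H_quad))/3 ≤ λ_max(H) ≤ λ_max(H_class) + λ_max(H_quad)`. -/
theorem traceless_CIFH_lamMax_bounds
    (n : ℕ) (hn : 1 ≤ n)
    (c : Fin (2*n) → Matrix (Fin (2^n)) (Fin (2^n)) ℂ) (hc : IsMajorana n c)
    (E E' : Finset (Fin n × Fin n))
    (hE : ∀ e ∈ E, e.1 < e.2) (hE' : ∀ e ∈ E', e.1 < e.2)
    (w : Fin n × Fin n → ℝ) (hw : ∀ e ∈ E, 0 ≤ w e)
    (w' : Fin n × Fin n → ℝ) (μ : Fin n → ℝ)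
    (Hclass Hquad : Matrix (Fin (2^n)) (Fin (2^n)) ℂ)
    (hclass : Hclass = ∑ e ∈ E, (w e : ℂ) • (((1:ℂ)/4) • 1 - num n c e.1 * num n c e.2)
        + ∑ j, (μ j : ℂ) • (num n c j - ((1:ℂ)/2) • 1))
    (hquad : Hquad = ∑ e ∈ E', (w' e : ℂ) •
        (-((ann n c e.1)ᴴ * ann n c e.2) - (ann n c e.2)ᴴ * ann n c e.1)) :
    (lamMax Hclass + lamMax Hquad) / 3 ≤ lamMax (Hclass + Hquad) ∧
    lamMax (Hclass + Hquad) ≤ lamMax Hclass + lamMax Hquad := by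
  subst hclass hquad
  exact traceless_CIFH_lamMax_bounds_general hc.isMajoranaFamily_comp_modeIndex
    (fun e he => (hE e he).ne) (fun e he => (hE' e he).ne) hw w' μ

end
end

section
/- Let n ≥ 1 and let c_1, …, c_{2n} ∈ ℂ^{2^n × 2^n} be Majorana operators. Let H = Σ_{(j,k)∈E} w_{jk}(1/4 − n_j n_k) + Σ_{(j,k)∈E'} w'_{jk}(−a_j† a_k − a_k† a_j) with w_{jk} ≥ 0 and w'_{jk} ∈ ℝ, and suppose the weighted graph G_class = (V, E) is bipartite. Let N̂ = Σ_{j∈V} n_j, let q ∈ {0,1,…,⌊n/2⌋}, and let λ_{max,⟨q⟩}(H) denote the maximum of tr(ρ' H) over all positive semi-definite ρ' ∈ ℂ^{2^n × 2^n} with tr(ρ') = 1 and tr(ρ' N̂) = q. Then there exists a fermionic Gaussian state ρ with tr(ρ N̂) = q and tr(ρ H) ≥ λ_{max,⟨q⟩}(H) / (2·((n − 2q)/n + 3/2)). -/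
open Matrix
open scoped ComplexOrder

noncomputable section

/-!
A particle-conserving Gaussian state is a product of factors `μ a†a + (1 - μ) aa†` over real
rotations of the modes. Each creation operator satisfies a KMS relation with this product, which
yields Wick's contraction rule; hence the energy of the state is an explicit function of its
correlation matrix `M`, and every real symmetric `0 ≤ M ≤ 1` occurs.

For an arbitrary state with correlation matrix `Γ` and `tr Γ = q`, positivity of `n_j n_k` bounds
the energy by `W + Q`, with `W = ∑ w / 4` and `Q` the hopping energy of `Γ`. Filling only the larger
side of the bipartition with `q` particles reaches `W`. Mixing `Γ` with weight
`t = n / (4 (n - q))` with a multiple of the diagonal part of `1 - Γ` makes all occupations at most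
`1/2`, so that the interaction energy is nonnegative, and reaches `t Q`. The better of the two is at
least `(W + Q) / (1 + 1/t)`, and `1 + 1/t = 2 ((n - 2q)/n + 3/2)`.
-/

section FermionModes

variable {m ι κ : Type*}

/-- The modes obtained from the family `a` by the real one-particle map `O`. -/
def rotate [Fintype ι] (O : Matrix κ ι ℝ) (a : ι → Matrix m m ℂ) (j : κ) : Matrix m m ℂ :=
  ∑ k, (O j k : ℂ) • a k

lemma conjTranspose_rotate [Fintype ι] (O : Matrix κ ι ℝ) (a : ι → Matrix m m ℂ) (j : κ) :
    (rotate O a j)ᴴ = rotate O (fun k => (a k)ᴴ) j := by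
  simp [rotate, conjTranspose_sum, conjTranspose_smul]

variable [Fintype m]

lemma rotate_anticomm_rotate [Fintype ι] (O : Matrix κ ι ℝ) (x y : ι → Matrix m m ℂ) (j k : κ) :
    rotate O x j * rotate O y k + rotate O y k * rotate O x j =
      ∑ p, ∑ r, ((O j p : ℂ) * O k r) • (x p * y r + y r * x p) := by
  have hyx : rotate O y k * rotate O x j = ∑ p, ∑ r, ((O j p : ℂ) * O k r) • (y r * x p) := by
    simp only [rotate, Finset.sum_mul_sum, smul_mul_smul_comm, mul_comm (O k _ : ℂ)]
    exact Finset.sum_comm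
  rw [hyx]
  simp only [rotate, Finset.sum_mul_sum, smul_mul_smul_comm, smul_add, Finset.sum_add_distrib]

variable [DecidableEq m] [DecidableEq ι]

/-- The canonical anticommutation relations for a family of annihilation operators. -/
structure IsCAR (a : ι → Matrix m m ℂ) : Prop where
  ann_ann : ∀ j k, a j * a k + a k * a j = 0
  cre_ann : ∀ j k, (a j)ᴴ * a k + a k * (a j)ᴴ = if j = k then 1 else 0

namespace IsCAR

variable {a : ι → Matrix m m ℂ}

protected lemma rotate [Fintype ι] [DecidableEq κ] (h : IsCAR a) {O : Matrix κ ι ℝ}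
    (hO : O * Oᵀ = 1) : IsCAR (rotate O a) where
  ann_ann j k := by simp [rotate_anticomm_rotate, h.ann_ann]
  cre_ann j k := by
    have hO' : ∑ p, (O j p : ℂ) * O k p = if j = k then 1 else 0 := by
      simpa [Matrix.mul_apply, Matrix.one_apply, apply_ite] using
        congrArg (fun M : Matrix κ κ ℝ => (M j k : ℂ)) hO
    simp only [conjTranspose_rotate, rotate_anticomm_rotate, h.cre_ann, smul_ite, smul_zero,
      Finset.sum_ite_eq, Finset.mem_univ, if_true, ← Finset.sum_smul, hO', ite_smul, one_smul,
      zero_smul]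

lemma ann_mul_ann (h : IsCAR a) (j k : ι) : a j * a k = -(a k * a j) :=
  eq_neg_of_add_eq_zero_left (h.ann_ann j k)

lemma ann_mul_self (h : IsCAR a) (j : ι) : a j * a j = 0 := by
  linear_combination (norm := module) (1 / 2 : ℂ) • h.ann_ann j j

lemma cre_mul_cre (h : IsCAR a) (j k : ι) : (a j)ᴴ * (a k)ᴴ = -((a k)ᴴ * (a j)ᴴ) := by
  simpa using congrArg conjTranspose (h.ann_mul_ann k j)

lemma cre_mul_self (h : IsCAR a) (j : ι) : (a j)ᴴ * (a j)ᴴ = 0 := by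
  simpa using congrArg conjTranspose (h.ann_mul_self j)

lemma ann_mul_cre (h : IsCAR a) (j k : ι) :
    a j * (a k)ᴴ = (if k = j then 1 else 0) - (a k)ᴴ * a j :=
  eq_sub_of_add_eq' (h.cre_ann k j)

lemma ann_mul_cre_of_ne (h : IsCAR a) {j k : ι} (hjk : j ≠ k) :
    a j * (a k)ᴴ = -((a k)ᴴ * a j) := by
  rw [h.ann_mul_cre, if_neg hjk.symm, zero_sub]

lemma cre_mul_ann_mul_cre (h : IsCAR a) (j : ι) : (a j)ᴴ * a j * (a j)ᴴ = (a j)ᴴ := by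
  rw [mul_assoc, h.ann_mul_cre, if_pos rfl, mul_sub, mul_one, ← mul_assoc, h.cre_mul_self,
    zero_mul, sub_zero]

lemma num_mul_num (h : IsCAR a) {j k : ι} (hjk : j ≠ k) :
    (a j)ᴴ * a j * ((a k)ᴴ * a k) = (a k * a j)ᴴ * (a k * a j) := by
  calc (a j)ᴴ * a j * ((a k)ᴴ * a k) = (a j)ᴴ * (a j * (a k)ᴴ) * a k := by simp only [mul_assoc]
    _ = (a j)ᴴ * (a k)ᴴ * (-(a j * a k)) := by
      rw [h.ann_mul_cre_of_ne hjk]; simp only [neg_mul, mul_neg, mul_assoc]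
    _ = (a k * a j)ᴴ * (a k * a j) := by
      rw [conjTranspose_mul, ← h.ann_mul_ann k j]

end IsCAR

/-- The (unnormalised) one-mode Gaussian factor of the mode `a` with occupation `μ`. -/
def modeFactor (a : Matrix m m ℂ) (μ : ℝ) : Matrix m m ℂ :=
  (μ : ℂ) • (aᴴ * a) + (1 - μ : ℂ) • (a * aᴴ)

/-- The unnormalised Gaussian product operator over the modes listed in `L`, with occupation
numbers `μ`. -/
def modeProduct (a : ι → Matrix m m ℂ) (μ : ι → ℝ) (L : List ι) : Matrix m m ℂ :=
  (L.map fun j => modeFactor (a j) (μ j)).prod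

namespace IsCAR

variable {a : ι → Matrix m m ℂ}

lemma modeFactor_mul_cre (h : IsCAR a) (μ : ℝ) (j : ι) :
    modeFactor (a j) μ * (a j)ᴴ = (μ : ℂ) • (a j)ᴴ := by
  rw [modeFactor, add_mul, smul_mul_assoc, smul_mul_assoc, h.cre_mul_ann_mul_cre, mul_assoc,
    h.cre_mul_self, mul_zero, smul_zero, add_zero]

lemma cre_mul_modeFactor (h : IsCAR a) (μ : ℝ) (j : ι) :
    (a j)ᴴ * modeFactor (a j) μ = (1 - μ : ℂ) • (a j)ᴴ := by
  rw [modeFactor, mul_add, mul_smul_comm, mul_smul_comm, ← mul_assoc, ← mul_assoc,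
    h.cre_mul_ann_mul_cre, h.cre_mul_self, zero_mul, smul_zero, zero_add]

lemma commute_cre_modeFactor (h : IsCAR a) (μ : ℝ) {j k : ι} (hjk : j ≠ k) :
    Commute ((a j)ᴴ) (modeFactor (a k) μ) := by
  have hnum : Commute ((a j)ᴴ) ((a k)ᴴ * a k) := by
    rw [Commute, SemiconjBy, ← mul_assoc, h.cre_mul_cre j k, mul_assoc,
      h.ann_mul_cre_of_ne hjk.symm]
    simp only [neg_mul, mul_neg, mul_assoc]
  have hhole : a k * (a k)ᴴ = 1 - (a k)ᴴ * a k := by rw [h.ann_mul_cre, if_pos rfl]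
  rw [modeFactor, hhole]
  exact (hnum.smul_right _).add_right (((Commute.one_right _).sub_right hnum).smul_right _)

lemma commute_cre_modeProduct (h : IsCAR a) (μ : ι → ℝ) {j : ι} {L : List ι} (hj : j ∉ L) :
    Commute ((a j)ᴴ) (modeProduct a μ L) := by
  refine Commute.list_prod_right _ _ fun x hx => ?_
  obtain ⟨k, hk, rfl⟩ := List.mem_map.mp hx
  exact h.commute_cre_modeFactor _ (ne_of_mem_of_not_mem hk hj).symm

-- The KMS condition of the Gaussian operator, cleared of denominators.
lemma modeProduct_mul_cre (h : IsCAR a) (μ : ι → ℝ) {j : ι} {L : List ι} (hL : L.Nodup)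
    (hj : j ∈ L) :
    (1 - μ j : ℂ) • (modeProduct a μ L * (a j)ᴴ) = (μ j : ℂ) • ((a j)ᴴ * modeProduct a μ L) := by
  obtain ⟨s, t, rfl⟩ := List.append_of_mem hj
  have hs : j ∉ s := fun hjs => List.disjoint_of_nodup_append hL hjs List.mem_cons_self
  have ht : j ∉ t := (List.nodup_cons.mp hL.of_append_right).1
  have hprod : modeProduct a μ (s ++ j :: t) =
      modeProduct a μ s * (modeFactor (a j) (μ j) * modeProduct a μ t) := by
    simp [modeProduct]
  have hright : modeProduct a μ (s ++ j :: t) * (a j)ᴴ =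
      (μ j : ℂ) • (modeProduct a μ s * (a j)ᴴ * modeProduct a μ t) := by
    rw [hprod, mul_assoc, mul_assoc, ← (h.commute_cre_modeProduct μ ht).eq, ← mul_assoc _ (a j)ᴴ,
      h.modeFactor_mul_cre, smul_mul_assoc, mul_smul_comm, mul_assoc]
  have hleft : (a j)ᴴ * modeProduct a μ (s ++ j :: t) =
      (1 - μ j : ℂ) • (modeProduct a μ s * (a j)ᴴ * modeProduct a μ t) := by
    rw [hprod, ← mul_assoc, (h.commute_cre_modeProduct μ hs).eq, mul_assoc, ← mul_assoc (a j)ᴴ,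
      h.cre_mul_modeFactor, smul_mul_assoc, mul_smul_comm, mul_assoc]
  rw [hright, hleft, smul_smul, smul_smul, mul_comm]

lemma trace_modeFactor_mul (h : IsCAR a) (μ : ℝ) {j : ι} {X : Matrix m m ℂ}
    (hX : Commute ((a j)ᴴ) X) : (modeFactor (a j) μ * X).trace = X.trace / 2 := by
  have hswap : ((a j)ᴴ * a j * X).trace = (a j * (a j)ᴴ * X).trace := by
    rw [mul_assoc, trace_mul_comm, mul_assoc, ← hX.eq, mul_assoc]
  have hsum : ((a j)ᴴ * a j * X).trace + (a j * (a j)ᴴ * X).trace = X.trace := by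
    rw [← trace_add, ← add_mul, h.cre_ann, if_pos rfl, one_mul]
  rw [modeFactor, add_mul, trace_add, smul_mul_assoc, smul_mul_assoc, trace_smul, trace_smul,
    smul_eq_mul, smul_eq_mul]
  linear_combination (1 / 2 : ℂ) * hsum + (μ - 1 / 2) * hswap

lemma trace_modeProduct (h : IsCAR a) (μ : ι → ℝ) {L : List ι} (hL : L.Nodup) :
    (modeProduct a μ L).trace = Fintype.card m / 2 ^ L.length := by
  induction L with
  | nil => simp [modeProduct]
  | cons j L ih =>
    obtain ⟨hj, hL⟩ := List.nodup_cons.mp hL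
    have hcons : modeProduct a μ (j :: L) = modeFactor (a j) (μ j) * modeProduct a μ L := by
      simp [modeProduct]
    rw [hcons, h.trace_modeFactor_mul _ (h.commute_cre_modeProduct μ hj), ih hL, List.length_cons,
      pow_succ, div_div]

end IsCAR

end FermionModes

section QuasiFree

variable {m ι κ : Type*} [Fintype m] [Fintype ι]

/-- `ρ` has trace one and obeys Wick's contraction rule with one-body correlation matrix
`M j k = tr (ρ a_j† a_k)`: a leftmost creation operator is contracted with the operator to its
right through their anticommutator. -/
structure IsQuasiFree (a : ι → Matrix m m ℂ) (M : Matrix ι ι ℝ) (ρ : Matrix m m ℂ) : Prop where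
  trace_eq_one : ρ.trace = 1
  trace_cre_mul : ∀ j Y, (ρ * ((a j)ᴴ * Y)).trace =
    ∑ k, (M j k : ℂ) * (ρ * ((a k)ᴴ * Y + Y * (a k)ᴴ)).trace

variable {a : ι → Matrix m m ℂ} {M : Matrix ι ι ℝ} {ρ : Matrix m m ℂ} [DecidableEq ι]

lemma IsQuasiFree.of_rotate [Fintype κ] {O : Matrix κ ι ℝ} {N : Matrix κ κ ℝ}
    (hO : Oᵀ * O = 1) (h : IsQuasiFree (rotate O a) N ρ) : IsQuasiFree a (Oᵀ * N * O) ρ where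
  trace_eq_one := h.trace_eq_one
  trace_cre_mul j Y := by
    let u : ι → ℂ := fun k => (ρ * ((a k)ᴴ * Y + Y * (a k)ᴴ)).trace
    let v : ι → ℂ := fun k => (ρ * ((a k)ᴴ * Y)).trace
    let Oc : Matrix κ ι ℂ := O.map Complex.ofRealHom
    have hu (p : κ) : (ρ * ((rotate O a p)ᴴ * Y + Y * (rotate O a p)ᴴ)).trace = (Oc *ᵥ u) p := by
      rw [conjTranspose_rotate]
      simp [rotate, u, Oc, mulVec, dotProduct, mul_add, Finset.mul_sum,
        Finset.sum_mul, Finset.sum_add_distrib, trace_sum]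
    have hv (p : κ) : (ρ * ((rotate O a p)ᴴ * Y)).trace = (Oc *ᵥ v) p := by
      rw [conjTranspose_rotate]
      simp [rotate, v, Oc, mulVec, dotProduct, Finset.mul_sum, Finset.sum_mul, trace_sum]
    have hN : Oc *ᵥ v = N.map Complex.ofRealHom *ᵥ Oc *ᵥ u := by
      ext p
      rw [← hv, h.trace_cre_mul]
      simp only [hu]
      rfl
    have hOc : Ocᵀ * Oc = 1 := by
      rw [← transpose_map, ← Matrix.map_mul, hO, Matrix.map_one _ (map_zero _) (map_one _)]
    calc v j = (Ocᵀ *ᵥ Oc *ᵥ v) j := by rw [mulVec_mulVec, hOc, one_mulVec]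
      _ = ((Oᵀ * N * O).map Complex.ofRealHom *ᵥ u) j := by
        rw [hN, mulVec_mulVec, mulVec_mulVec, Matrix.map_mul, Matrix.map_mul, transpose_map]

variable [DecidableEq m]

lemma IsCAR.isQuasiFree_modeProduct (h : IsCAR a) (μ : ι → ℝ) {L : List ι}
    (hL : L.Nodup) (hmem : ∀ j, j ∈ L) (hdim : Fintype.card m = 2 ^ L.length) :
    IsQuasiFree a (diagonal μ) (modeProduct a μ L) where
  trace_eq_one := by
    rw [h.trace_modeProduct μ hL, hdim, Nat.cast_pow, Nat.cast_ofNat, div_self (by positivity)]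
  trace_cre_mul j Y := by
    have hkms := congrArg (fun Z => (Z * Y).trace) (h.modeProduct_mul_cre μ hL (hmem j))
    simp only [smul_mul_assoc, trace_smul, smul_eq_mul] at hkms
    rw [Finset.sum_eq_single j (fun k _ hkj => by rw [diagonal_apply_ne' _ hkj]; simp)
      (by simp), diagonal_apply_eq, mul_add, trace_add, ← mul_assoc, ← mul_assoc,
      trace_mul_comm _ (a j)ᴴ, ← mul_assoc (a j)ᴴ]
    linear_combination hkms

namespace IsQuasiFree

lemma trace_cre_mul_ann (h : IsQuasiFree a M ρ) (ha : IsCAR a) (j k : ι) :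
    (ρ * ((a j)ᴴ * a k)).trace = M j k := by
  simp [h.trace_cre_mul, ha.cre_ann, h.trace_eq_one, apply_ite]

lemma trace_ann_mul_cre (h : IsQuasiFree a M ρ) (ha : IsCAR a) (j k : ι) :
    (ρ * (a j * (a k)ᴴ)).trace = ((1 : Matrix ι ι ℝ) k j - M k j : ℝ) := by
  simp only [ha.ann_mul_cre, mul_sub, trace_sub, h.trace_cre_mul_ann ha, one_apply]
  split_ifs <;> simp [h.trace_eq_one]

lemma trace_cre_ann_mul_cre_ann (h : IsQuasiFree a M ρ) (ha : IsCAR a) (i j k l : ι) :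
    (ρ * ((a i)ᴴ * a j * ((a k)ᴴ * a l))).trace =
      (M i j * M k l + M i l * ((1 : Matrix ι ι ℝ) k j - M k j) : ℝ) := by
  have hcontract (x : ι) : (a x)ᴴ * (a j * ((a k)ᴴ * a l)) + a j * ((a k)ᴴ * a l) * (a x)ᴴ =
      (if x = j then 1 else 0) * ((a k)ᴴ * a l) +
        a j * (a k)ᴴ * (if x = l then 1 else 0) := by
    rw [← ha.cre_ann x j, ← ha.cre_ann x l]
    have hcre : (a x)ᴴ * (a k)ᴴ + (a k)ᴴ * (a x)ᴴ = 0 := by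
      rw [ha.cre_mul_cre x k, neg_add_cancel]
    have hjl : a j * ((a x)ᴴ * (a k)ᴴ + (a k)ᴴ * (a x)ᴴ) * a l = 0 := by simp [hcre]
    linear_combination (norm := noncomm_ring) -hjl
  rw [mul_assoc, h.trace_cre_mul]
  simp only [hcontract, mul_add, trace_add, Finset.sum_add_distrib, mul_ite, ite_mul, one_mul,
    mul_one, zero_mul, mul_zero, apply_ite trace, trace_zero, Finset.sum_ite_eq',
    Finset.mem_univ, if_true, h.trace_cre_mul_ann ha, h.trace_ann_mul_cre ha]
  simp

end IsQuasiFree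

end QuasiFree

section Interval

open scoped MatrixOrder

variable {ι : Type*} [DecidableEq ι]

lemma diagonal_mem_Icc_iff {d : ι → ℝ} :
    diagonal d ∈ Set.Icc (0 : Matrix ι ι ℝ) 1 ↔ ∀ j, d j ∈ Set.Icc (0 : ℝ) 1 := by
  rw [Set.mem_Icc, nonneg_iff_posSemidef, Matrix.le_iff, ← diagonal_one, diagonal_sub,
    posSemidef_diagonal_iff, posSemidef_diagonal_iff, ← forall_and]
  simp only [sub_nonneg, Set.mem_Icc]

lemma exists_eq_transpose_mul_diagonal_mul [Fintype ι] {M : Matrix ι ι ℝ}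
    (hM : M ∈ Set.Icc (0 : Matrix ι ι ℝ) 1) :
    ∃ (O : Matrix ι ι ℝ) (μ : ι → ℝ), O * Oᵀ = 1 ∧ (∀ j, μ j ∈ Set.Icc (0 : ℝ) 1) ∧
      M = Oᵀ * diagonal μ * O := by
  have hherm : M.IsHermitian := (nonneg_iff_posSemidef.mp hM.1).isHermitian
  let U : Matrix ι ι ℝ := hherm.eigenvectorUnitary
  have hUU : star U * U = 1 := (mem_unitaryGroup_iff' (A := U)).mp hherm.eigenvectorUnitary.2
  have hspec : M = U * diagonal hherm.eigenvalues * star U := by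
    simpa [Unitary.conjStarAlgAut_apply, Function.comp_def] using hherm.spectral_theorem
  have hdiag : star U * M * U = diagonal hherm.eigenvalues := by
    calc star U * M * U = star U * U * diagonal hherm.eigenvalues * (star U * U) := by
          conv_lhs => rw [hspec]
          simp only [mul_assoc]
      _ = diagonal hherm.eigenvalues := by rw [hUU, one_mul, mul_one]
  have hmem : diagonal hherm.eigenvalues ∈ Set.Icc (0 : Matrix ι ι ℝ) 1 := by
    rw [← hdiag]
    refine ⟨by simpa using star_left_conjugate_le_conjugate hM.1 U, ?_⟩
    simpa [hUU] using star_left_conjugate_le_conjugate hM.2 U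
  rw [star_eq_conjTranspose, conjTranspose_eq_transpose_of_trivial] at hUU hspec
  exact ⟨Uᵀ, hherm.eigenvalues, hUU, diagonal_mem_Icc_iff.mp hmem, hspec⟩

end Interval

section Majorana

variable {n : ℕ} {c : Fin (2 * n) → Matrix (Fin (2 ^ n)) (Fin (2 ^ n)) ℂ}

/-- The position of the Majorana operators of each mode in the list of all `2n` of them. -/
def modeEquiv (n : ℕ) : Fin n × Fin 2 ≃ Fin (2 * n) :=
  finProdFinEquiv.trans (finCongr (mul_comm n 2))

lemma modeEquiv_zero (j : Fin n) : modeEquiv n (j, 0) = ⟨2 * j, by omega⟩ := by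
  ext; simp [modeEquiv]

lemma modeEquiv_one (j : Fin n) : modeEquiv n (j, 1) = ⟨2 * j + 1, by omega⟩ := by
  ext; simp [modeEquiv, add_comm]

lemma majA_eq_modeEquiv (c : Fin (2 * n) → Matrix (Fin (2 ^ n)) (Fin (2 ^ n)) ℂ) (j : Fin n) :
    majA n c j = c (modeEquiv n (j, 0)) :=
  congrArg c (modeEquiv_zero j).symm

lemma majB_eq_modeEquiv (c : Fin (2 * n) → Matrix (Fin (2 ^ n)) (Fin (2 ^ n)) ℂ) (j : Fin n) :
    majB n c j = c (modeEquiv n (j, 1)) :=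
  congrArg c (modeEquiv_one j).symm

namespace IsMajorana

lemma conjTranspose_ann (hc : IsMajorana n c) (j : Fin n) :
    (ann n c j)ᴴ = ((1 : ℂ) / 2) • (majA n c j - Complex.I • majB n c j) := by
  have hA : (majA n c j)ᴴ = majA n c j := hc.1 _
  have hB : (majB n c j)ᴴ = majB n c j := hc.1 _
  simp [ann, conjTranspose_smul, conjTranspose_add, hA, hB, sub_eq_add_neg]

lemma majA_eq (hc : IsMajorana n c) (j : Fin n) : majA n c j = ann n c j + (ann n c j)ᴴ := by
  rw [hc.conjTranspose_ann, ann]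
  module

lemma majB_eq (hc : IsMajorana n c) (j : Fin n) :
    majB n c j = -Complex.I • (ann n c j - (ann n c j)ᴴ) := by
  rw [hc.conjTranspose_ann, ann]
  linear_combination (norm := module) Complex.I_mul_I • majB n c j

lemma isCAR_ann (hc : IsMajorana n c) : IsCAR (ann n c) := by
  have hAA (j k) : majA n c j * majA n c k + majA n c k * majA n c j =
      if j = k then (2 : ℂ) • 1 else 0 := by
    simp [majA_eq_modeEquiv, hc.2]
  have hBB (j k) : majB n c j * majB n c k + majB n c k * majB n c j =
      if j = k then (2 : ℂ) • 1 else 0 := by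
    simp [majB_eq_modeEquiv, hc.2]
  have hAB (j k) : majA n c j * majB n c k + majB n c k * majA n c j = 0 := by
    simp [majA_eq_modeEquiv, majB_eq_modeEquiv, hc.2]
  have hsq : Complex.I * Complex.I = -1 := Complex.I_mul_I
  constructor <;> intro j k
  · simp only [ann, mul_add, add_mul, smul_mul_assoc, mul_smul_comm]
    linear_combination (norm := module) (1 / 4 : ℂ) • hAA j k - (1 / 4 : ℂ) • hBB j k +
      (Complex.I / 4) • hAB j k + (Complex.I / 4) • hAB k j +
      (1 / 4 : ℂ) • hsq • (majB n c j * majB n c k + majB n c k * majB n c j)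
  · have hdelta : (if j = k then 1 else 0 : Matrix (Fin (2 ^ n)) (Fin (2 ^ n)) ℂ) =
        (1 / 2 : ℂ) • if j = k then (2 : ℂ) • 1 else 0 := by
      split_ifs <;> module
    rw [hc.conjTranspose_ann, ann, hdelta]
    simp only [mul_add, sub_mul, mul_sub, add_mul, smul_mul_assoc, mul_smul_comm]
    linear_combination (norm := module) (1 / 4 : ℂ) • hAA j k + (1 / 4 : ℂ) • hBB j k +
      (Complex.I / 4) • hAB j k - (Complex.I / 4) • hAB k j -
      (1 / 4 : ℂ) • hsq • (majB n c j * majB n c k + majB n c k * majB n c j)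

end IsMajorana

/-- The one-particle rotation `O` as a rotation of all Majorana operators, acting in the same way
on both Majorana operators of a mode. -/
def blockRotation (O : Matrix (Fin n) (Fin n) ℝ) : Matrix (Fin (2 * n)) (Fin (2 * n)) ℝ :=
  reindex (modeEquiv n) (modeEquiv n) (kroneckerMap (· * ·) O (1 : Matrix (Fin 2) (Fin 2) ℝ))

lemma blockRotation_mul_transpose {O : Matrix (Fin n) (Fin n) ℝ} (hO : O * Oᵀ = 1) :
    blockRotation O * (blockRotation O)ᵀ = 1 := by
  rw [blockRotation, transpose_reindex, reindex_apply, reindex_apply, submatrix_mul_equiv,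
    ← kroneckerMap_transpose, ← mul_kronecker_mul, hO]
  simp

lemma det_blockRotation {O : Matrix (Fin n) (Fin n) ℝ} (hO : O * Oᵀ = 1) :
    (blockRotation O).det = 1 := by
  have hdet : O.det ^ 2 = 1 := by simpa [sq] using congrArg det hO
  rw [blockRotation, det_reindex_self, det_kronecker]
  simp [hdet]

lemma sum_blockRotation_smul (O : Matrix (Fin n) (Fin n) ℝ)
    (c : Fin (2 * n) → Matrix (Fin (2 ^ n)) (Fin (2 ^ n)) ℂ) (j : Fin n) (x : Fin 2) :
    ∑ k, (blockRotation O (modeEquiv n (j, x)) k : ℂ) • c k =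
      rotate O (fun k => c (modeEquiv n (k, x))) j := by
  rw [← (modeEquiv n).sum_comp, Fintype.sum_prod_type]
  simp [blockRotation, rotate, kroneckerMap_apply, one_apply, ite_smul]

lemma one_add_smul_eq_modeFactor {m : Type*} [Fintype m] [DecidableEq m] {X : Matrix m m ℂ}
    (hX : X * X = 0) (hcar : Xᴴ * X + X * Xᴴ = 1) (μ : ℝ) :
    1 + (Complex.I * (2 * μ - 1 : ℝ)) • ((X + Xᴴ) * (-Complex.I • (X - Xᴴ))) =
      (2 : ℂ) • modeFactor X μ := by
  have hX' : Xᴴ * Xᴴ = 0 := by simpa using congrArg conjTranspose hX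
  have hsq : Complex.I * Complex.I = -1 := Complex.I_mul_I
  have hprod : (X + Xᴴ) * (X - Xᴴ) = Xᴴ * X - X * Xᴴ := by
    rw [add_mul, mul_sub, mul_sub, hX, hX']; abel
  have hscalar : Complex.I * (2 * μ - 1 : ℝ) * -Complex.I = 2 * μ - 1 := by
    push_cast
    linear_combination (1 - 2 * μ : ℂ) * hsq
  rw [mul_smul_comm, smul_smul, hscalar, hprod, ← hcar, modeFactor]
  module

lemma IsMajorana.gaussOf_blockRotation (hc : IsMajorana n c) {O : Matrix (Fin n) (Fin n) ℝ}
    (hO : O * Oᵀ = 1) (μ : Fin n → ℝ) :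
    gaussOf n c (fun j => 2 * μ j - 1) (blockRotation O) =
      modeProduct (rotate O (ann n c)) μ (List.finRange n) := by
  have hcar := hc.isCAR_ann.rotate hO
  have hA (j : Fin n) : ∑ k, (blockRotation O ⟨2 * j, by omega⟩ k : ℂ) • c k =
      rotate O (ann n c) j + (rotate O (ann n c) j)ᴴ := by
    rw [← modeEquiv_zero, sum_blockRotation_smul, conjTranspose_rotate]
    simp only [rotate, ← majA_eq_modeEquiv, hc.majA_eq, smul_add, Finset.sum_add_distrib]
  have hB (j : Fin n) : ∑ k, (blockRotation O ⟨2 * j + 1, by omega⟩ k : ℂ) • c k =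
      -Complex.I • (rotate O (ann n c) j - (rotate O (ann n c) j)ᴴ) := by
    rw [← modeEquiv_one, sum_blockRotation_smul, conjTranspose_rotate]
    simp only [rotate, ← majB_eq_modeEquiv, hc.majB_eq, smul_comm _ (-Complex.I), smul_sub,
      Finset.sum_sub_distrib, Finset.smul_sum]
  have hfactor (j) := one_add_smul_eq_modeFactor (hcar.ann_mul_self j)
    ((hcar.cre_ann j j).trans (if_pos rfl)) (μ j)
  simp only [gaussOf, hA, hB, hfactor]
  rw [inv_smul_eq_iff₀ (by positivity), modeProduct]
  simpa [Function.comp_def] using (List.smul_prod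
    ((List.finRange n).map fun j => modeFactor (rotate O (ann n c) j) (μ j)) (2 : ℂ)).symm

open scoped MatrixOrder in
lemma IsMajorana.exists_isGaussianState_isQuasiFree (hc : IsMajorana n c)
    {M : Matrix (Fin n) (Fin n) ℝ} (hM : M ∈ Set.Icc (0 : Matrix (Fin n) (Fin n) ℝ) 1) :
    ∃ ρ, IsGaussianState n c ρ ∧ IsQuasiFree (ann n c) M ρ := by
  obtain ⟨O, μ, hO, hμ, rfl⟩ := exists_eq_transpose_mul_diagonal_mul hM
  refine ⟨modeProduct (rotate O (ann n c)) μ (List.finRange n), ?_, ?_⟩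
  · refine ⟨fun j => 2 * μ j - 1, blockRotation O, fun j => ?_, blockRotation_mul_transpose hO,
      det_blockRotation hO, (hc.gaussOf_blockRotation hO μ).symm⟩
    constructor <;> linarith [(hμ j).1, (hμ j).2]
  · exact ((hc.isCAR_ann.rotate hO).isQuasiFree_modeProduct μ (List.nodup_finRange n)
      List.mem_finRange (by simp)).of_rotate (mul_eq_one_comm.mp hO)

end Majorana

section States

open scoped MatrixOrder

variable {m ι : Type*} [Fintype m]

lemma re_trace_mul_conjTranspose_mul_self_nonneg {ρ : Matrix m m ℂ}
    (hρ : ρ.PosSemidef) (X : Matrix m m ℂ) : 0 ≤ (ρ * (Xᴴ * X)).trace.re := by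
  rw [← mul_assoc, trace_mul_comm, ← mul_assoc]
  exact (Complex.nonneg_iff.mp (hρ.mul_mul_conjTranspose_same X).trace_nonneg).1

/-- The real part of the Gram matrix of the operators `X` in the state `ρ`. For annihilation
operators it is the (real) one-body correlation matrix. -/
def reGram (ρ : Matrix m m ℂ) (X : ι → Matrix m m ℂ) : Matrix ι ι ℝ :=
  of fun j k => (ρ * ((X j)ᴴ * X k)).trace.re

variable {ρ : Matrix m m ℂ}

lemma reGram_apply (X : ι → Matrix m m ℂ) (j k : ι) :
    reGram ρ X j k = (ρ * ((X j)ᴴ * X k)).trace.re := rfl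

lemma isSymm_reGram (hρ : ρ.IsHermitian) (X : ι → Matrix m m ℂ) : (reGram ρ X).IsSymm := by
  ext j k
  have hconj : (ρ * ((X k)ᴴ * X j)).trace = star (ρ * ((X j)ᴴ * X k)).trace := by
    rw [← trace_conjTranspose, conjTranspose_mul, conjTranspose_mul, conjTranspose_conjTranspose,
      hρ.eq, trace_mul_comm]
  simp [reGram_apply, hconj]

lemma reGram_nonneg (hρ : ρ.PosSemidef) (X : ι → Matrix m m ℂ) : 0 ≤ reGram ρ X := by
  refine nonneg_iff_posSemidef.mpr
    ⟨isHermitian_iff_isSymm.mpr (isSymm_reGram hρ.1 X), fun v => ?_⟩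
  let Z : Matrix m m ℂ := ∑ k ∈ v.support, (v k : ℂ) • X k
  have hZZ : Zᴴ * Z =
      ∑ j ∈ v.support, ∑ k ∈ v.support, ((v j * v k : ℝ) : ℂ) • ((X j)ᴴ * X k) := by
    simp only [Z, conjTranspose_sum, conjTranspose_smul, Finset.sum_mul_sum, smul_mul_smul_comm,
      Complex.star_def, Complex.conj_ofReal, Complex.ofReal_mul]
  have hZ : (v.sum fun j x => v.sum fun k y => star x * reGram ρ X j k * y) =
      (ρ * (Zᴴ * Z)).trace.re := by
    simp only [hZZ, Finset.mul_sum, mul_smul_comm, trace_sum, trace_smul, Complex.re_sum,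
      smul_eq_mul, Complex.re_ofReal_mul, Finsupp.sum, star_trivial, reGram_apply]
    exact Finset.sum_congr rfl fun j _ => Finset.sum_congr rfl fun k _ => by ring
  rw [hZ]
  exact re_trace_mul_conjTranspose_mul_self_nonneg hρ Z

variable [DecidableEq m] [DecidableEq ι]

lemma IsCAR.reGram_mem_Icc {a : ι → Matrix m m ℂ} (h : IsCAR a) (hρ : ρ.PosSemidef)
    (htr : ρ.trace = 1) : reGram ρ a ∈ Set.Icc (0 : Matrix ι ι ℝ) 1 := by
  refine ⟨reGram_nonneg hρ a, sub_nonneg.mp ?_⟩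
  have hholes : 1 - reGram ρ a = reGram ρ (fun j => (a j)ᴴ) := by
    ext j k
    rw [Matrix.sub_apply, ← (isSymm_reGram hρ.1 a).apply, reGram_apply, reGram_apply,
      conjTranspose_conjTranspose, h.ann_mul_cre, mul_sub, trace_sub, Complex.sub_re, one_apply]
    by_cases hjk : j = k <;> simp [hjk, Ne.symm, htr]
  rw [hholes]
  exact reGram_nonneg hρ _

end States

section Energy

variable {m ι : Type*} [Fintype m]

/-- The particle number operator `N̂`. -/
def totalNumber [Fintype ι] (a : ι → Matrix m m ℂ) : Matrix m m ℂ := ∑ j, (a j)ᴴ * a j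

lemma trace_reGram [Fintype ι] (a : ι → Matrix m m ℂ) (ρ : Matrix m m ℂ) :
    (reGram ρ a).trace = (ρ * totalNumber a).trace.re := by
  rw [totalNumber, Finset.mul_sum, trace_sum, Complex.re_sum]
  rfl

variable [DecidableEq m]

/-- The Hamiltonian `∑_E w_{jk} (1/4 - n_j n_k) + ∑_E' w'_{jk} (-a_j† a_k - a_k† a_j)`. -/
def hamiltonian (a : ι → Matrix m m ℂ) (E E' : Finset (ι × ι)) (w w' : ι × ι → ℝ) :
    Matrix m m ℂ :=
  ∑ e ∈ E, (w e : ℂ) • (((1 : ℂ) / 4) • 1 - (a e.1)ᴴ * a e.1 * ((a e.2)ᴴ * a e.2)) +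
    ∑ e ∈ E', (w' e : ℂ) • (-((a e.1)ᴴ * a e.2) - (a e.2)ᴴ * a e.1)

/-- The interaction energy, by Wick's theorem, of a quasi-free state with correlation
matrix `M`. -/
def interactionEnergy (E : Finset (ι × ι)) (w : ι × ι → ℝ) (M : Matrix ι ι ℝ) : ℝ :=
  ∑ e ∈ E, w e * (1 / 4 - (M e.1 e.1 * M e.2 e.2 - M e.1 e.2 ^ 2))

/-- The hopping energy of a state with correlation matrix `M`. -/
def hoppingEnergy (E' : Finset (ι × ι)) (w' : ι × ι → ℝ) (M : Matrix ι ι ℝ) : ℝ :=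
  ∑ e ∈ E', w' e * (-2 * M e.1 e.2)

variable {a : ι → Matrix m m ℂ} {ρ : Matrix m m ℂ} {E E' : Finset (ι × ι)} {w w' : ι × ι → ℝ}

lemma re_trace_mul_hamiltonian (htr : ρ.trace = 1) :
    (ρ * hamiltonian a E E' w w').trace.re =
      ∑ e ∈ E, w e * (1 / 4 - (ρ * ((a e.1)ᴴ * a e.1 * ((a e.2)ᴴ * a e.2))).trace.re) +
      ∑ e ∈ E', w' e * (-reGram ρ a e.1 e.2 - reGram ρ a e.2 e.1) := by
  simp [hamiltonian, mul_add, Finset.mul_sum, trace_sum, mul_sub, trace_sub, htr, reGram_apply]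

lemma IsCAR.re_trace_mul_hamiltonian_le [DecidableEq ι] (h : IsCAR a) (hρ : ρ.PosSemidef)
    (htr : ρ.trace = 1) (hne : ∀ e ∈ E, e.1 ≠ e.2) (hw : ∀ e ∈ E, 0 ≤ w e) :
    (ρ * hamiltonian a E E' w w').trace.re ≤
      (∑ e ∈ E, w e) / 4 + hoppingEnergy E' w' (reGram ρ a) := by
  rw [re_trace_mul_hamiltonian htr, hoppingEnergy, Finset.sum_div]
  refine add_le_add (Finset.sum_le_sum fun e he => ?_) (Finset.sum_congr rfl fun e _ => ?_).le
  · have hpair := re_trace_mul_conjTranspose_mul_self_nonneg hρ (a e.2 * a e.1)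
    rw [h.num_mul_num (hne e he)]
    nlinarith [hw e he]
  · rw [(isSymm_reGram hρ.1 a).apply]
    ring

namespace IsQuasiFree

variable [Fintype ι] [DecidableEq ι] {M : Matrix ι ι ℝ}

lemma trace_mul_totalNumber (h : IsQuasiFree a M ρ) (ha : IsCAR a) :
    (ρ * totalNumber a).trace = (M.trace : ℝ) := by
  rw [totalNumber, Finset.mul_sum, trace_sum, trace, Complex.ofReal_sum]
  exact Finset.sum_congr rfl fun j _ => h.trace_cre_mul_ann ha j j

lemma trace_mul_hamiltonian (h : IsQuasiFree a M ρ) (ha : IsCAR a) (hM : M.IsSymm)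
    (hE : ∀ e ∈ E, e.1 ≠ e.2) :
    (ρ * hamiltonian a E E' w w').trace =
      (interactionEnergy E w M + hoppingEnergy E' w' M : ℝ) := by
  simp only [hamiltonian, interactionEnergy, hoppingEnergy, mul_add, Finset.mul_sum,
    mul_smul_comm, mul_sub, mul_neg, mul_one, trace_add, trace_sum, trace_smul, trace_sub,
    trace_neg, h.trace_eq_one, h.trace_cre_mul_ann ha, h.trace_cre_ann_mul_cre_ann ha,
    smul_eq_mul, Complex.ofReal_add, Complex.ofReal_sum]
  congr 1 <;> refine Finset.sum_congr rfl fun e he => ?_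
  · rw [one_apply_ne (hE e he).symm, hM.apply e.1 e.2]
    push_cast
    ring
  · rw [hM.apply]
    push_cast
    ring

end IsQuasiFree

end Energy

section Optimization

open scoped MatrixOrder

variable {ι : Type*} {E E' : Finset (ι × ι)} {w w' : ι × ι → ℝ}

lemma diag_mem_Icc [DecidableEq ι] {M : Matrix ι ι ℝ}
    (hM : M ∈ Set.Icc (0 : Matrix ι ι ℝ) 1) (j : ι) :
    M j j ∈ Set.Icc (0 : ℝ) 1 := by
  have h0 := (nonneg_iff_posSemidef.mp hM.1).diag_nonneg (i := j)
  have h1 := (Matrix.le_iff.mp hM.2).diag_nonneg (i := j)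
  rw [Matrix.sub_apply, one_apply_eq] at h1
  exact ⟨h0, sub_nonneg.mp h1⟩

lemma interactionEnergy_nonneg (hw : ∀ e ∈ E, 0 ≤ w e) {M : Matrix ι ι ℝ}
    (hM : ∀ j, M j j ∈ Set.Icc (0 : ℝ) (1 / 2)) : 0 ≤ interactionEnergy E w M := by
  refine Finset.sum_nonneg fun e he => mul_nonneg (hw e he) ?_
  have hprod : M e.1 e.1 * M e.2 e.2 ≤ 1 / 2 * (1 / 2) :=
    mul_le_mul (hM e.1).2 (hM e.2).2 (hM e.2).1 (by norm_num)
  linarith [sq_nonneg (M e.1 e.2)]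

lemma interactionEnergy_diagonal [DecidableEq ι] {d : ι → ℝ} (hne : ∀ e ∈ E, e.1 ≠ e.2)
    (hd : ∀ e ∈ E, d e.1 * d e.2 = 0) :
    interactionEnergy E w (diagonal d) = (∑ e ∈ E, w e) / 4 := by
  rw [interactionEnergy, Finset.sum_div]
  refine Finset.sum_congr rfl fun e he => ?_
  rw [diagonal_apply_eq, diagonal_apply_eq, diagonal_apply_ne _ (hne e he), hd e he]
  ring

lemma hoppingEnergy_diagonal [DecidableEq ι] {d : ι → ℝ}
    (hne : ∀ e ∈ E', e.1 ≠ e.2) : hoppingEnergy E' w' (diagonal d) = 0 :=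
  Finset.sum_eq_zero fun e he => by rw [diagonal_apply_ne _ (hne e he)]; ring

lemma ne_of_bipartite {A : Finset ι} {j k : ι} (h : (j ∈ A ∧ k ∉ A) ∨ (j ∉ A ∧ k ∈ A)) :
    j ≠ k := by
  rintro rfl
  tauto

variable [Fintype ι]

lemma exists_density_sum_eq (B : Finset ι) {q : ℝ} (hq0 : 0 ≤ q) (hqB : q ≤ B.card) :
    ∃ d : ι → ℝ, (∀ j, d j ∈ Set.Icc (0 : ℝ) 1) ∧ ∑ j, d j = q ∧ ∀ j ∉ B, d j = 0 := by
  classical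
  refine ⟨fun j => if j ∈ B then q / B.card else 0, fun j => ?_, ?_, fun j hj => if_neg hj⟩
  · by_cases hj : j ∈ B <;> simp only [hj, if_true, if_false]
    exacts [⟨by positivity, div_le_one_of_le₀ hqB (by positivity)⟩, ⟨le_rfl, zero_le_one⟩]
  · rw [Finset.sum_ite_mem, Finset.univ_inter, Finset.sum_const, nsmul_eq_mul]
    exact mul_div_cancel_of_imp' fun hB => le_antisymm (hB ▸ hqB) hq0

lemma exists_density_mul_eq_zero_of_bipartite (A : Finset ι)
    (hbip : ∀ e ∈ E, (e.1 ∈ A ∧ e.2 ∉ A) ∨ (e.1 ∉ A ∧ e.2 ∈ A)) {q : ℝ} (hq0 : 0 ≤ q)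
    (hq : 2 * q ≤ Fintype.card ι) :
    ∃ d : ι → ℝ, (∀ j, d j ∈ Set.Icc (0 : ℝ) 1) ∧ ∑ j, d j = q ∧ ∀ e ∈ E, d e.1 * d e.2 = 0 := by
  classical
  obtain ⟨B, hqB, hB⟩ : ∃ B : Finset ι, q ≤ B.card ∧ ∀ e ∈ E, e.1 ∉ B ∨ e.2 ∉ B := by
    have hcard : (A.card : ℝ) + Aᶜ.card = Fintype.card ι := mod_cast A.card_add_card_compl
    rcases le_total q A.card with hqA | hqA
    · exact ⟨A, hqA, fun e he => (hbip e he).symm.imp And.left And.right⟩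
    · refine ⟨Aᶜ, by linarith, fun e he => ?_⟩
      simpa using (hbip e he).imp And.left And.right
  obtain ⟨d, hd, hsum, hzero⟩ := exists_density_sum_eq B hq0 hqB
  exact ⟨d, hd, hsum, fun e he => mul_eq_zero.mpr ((hB e he).imp (hzero _) (hzero _))⟩

variable [DecidableEq ι]

lemma exists_complement_weight {N q : ℝ} (hq : 0 ≤ q) (hNq : 0 < N - q) (hhalf : 2 * q ≤ N) :
    ∃ α ∈ Set.Icc (0 : ℝ) 1, α * (N - q) = q ∧ (1 - N / (4 * (N - q))) * α ≤ 1 / 2 := by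
  refine ⟨q / (N - q), ⟨by positivity, by rw [div_le_one hNq]; linarith⟩,
    div_mul_cancel₀ q hNq.ne', ?_⟩
  have hexpand : (1 - N / (4 * (N - q))) * (q / (N - q)) =
      (3 * N - 4 * q) * q / (4 * (N - q) ^ 2) := by
    field_simp
    ring
  rw [hexpand, div_le_iff₀ (by positivity)]
  nlinarith [mul_nonneg (show 0 ≤ 2 * N - 3 * q by linarith) (show 0 ≤ N - 2 * q by linarith)]

-- Mixing `Γ` with a multiple of its particle-hole complement preserves the trace and pushes every
-- occupation below one half.
lemma exists_damped_of_two_mul_trace_le [Nonempty ι] {Γ : Matrix ι ι ℝ}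
    (hΓ : Γ ∈ Set.Icc (0 : Matrix ι ι ℝ) 1) (hhalf : 2 * Γ.trace ≤ Fintype.card ι) :
    ∃ M ∈ Set.Icc (0 : Matrix ι ι ℝ) 1, M.trace = Γ.trace ∧ (∀ j, M j j ≤ 1 / 2) ∧
      ∀ j k, j ≠ k → M j k = Fintype.card ι / (4 * (Fintype.card ι - Γ.trace)) * Γ j k := by
  have hdiag (j) := diag_mem_Icc hΓ j
  have hN : (0 : ℝ) < Fintype.card ι := mod_cast Fintype.card_pos
  have hq : 0 ≤ Γ.trace := Finset.sum_nonneg fun j _ => (hdiag j).1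
  set N : ℝ := (Fintype.card ι : ℝ)
  set q : ℝ := Γ.trace
  have hNq : 0 < N - q := by linarith
  obtain ⟨α, ⟨hα0, hα1⟩, hα, hαt⟩ := exists_complement_weight hq hNq hhalf
  set t : ℝ := N / (4 * (N - q)) with ht
  have ht0 : 0 ≤ t := by positivity
  have ht1 : t ≤ 1 / 2 := by rw [ht, div_le_iff₀ (by positivity)]; linarith
  have hcomplement : diagonal (fun j => α * (1 - Γ j j)) ∈ Set.Icc (0 : Matrix ι ι ℝ) 1 :=
    diagonal_mem_Icc_iff.mpr fun j =>
      ⟨mul_nonneg hα0 (sub_nonneg.mpr (hdiag j).2),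
        mul_le_one₀ hα1 (sub_nonneg.mpr (hdiag j).2) (sub_le_self _ (hdiag j).1)⟩
  have htrace : ∑ j, α * (1 - Γ j j) = q := by
    rw [← Finset.mul_sum, Finset.sum_sub_distrib, Finset.sum_const, Finset.card_univ,
      nsmul_eq_mul, mul_one]
    exact hα
  refine ⟨t • Γ + (1 - t) • diagonal fun j => α * (1 - Γ j j),
    convex_Icc _ _ hΓ hcomplement ht0 (by linarith) (by ring), ?_, fun j => ?_,
    fun j k hjk => by simp [hjk]⟩
  · rw [trace_add, trace_smul, trace_smul, trace_diagonal, htrace]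
    simp only [smul_eq_mul]
    ring
  · have hjj : (t • Γ + (1 - t) • diagonal fun j => α * (1 - Γ j j)) j j =
        t * Γ j j + (1 - t) * α * (1 - Γ j j) := by
      simp [mul_assoc]
    rw [hjj]
    nlinarith [(hdiag j).1, (hdiag j).2]

lemma add_div_one_add_inv_le_max {t : ℝ} (ht : 0 < t) (x y : ℝ) :
    (x + y) / (1 + t⁻¹) ≤ max x (t * y) := by
  have hy : y ≤ t⁻¹ * max x (t * y) := by
    rw [le_inv_mul_iff₀ ht]
    exact le_max_right _ _
  rw [div_le_iff₀ (by positivity)]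
  linarith [le_max_left x (t * y)]

lemma exists_mem_Icc_energy_ge (A : Finset ι)
    (hbip : ∀ e ∈ E, (e.1 ∈ A ∧ e.2 ∉ A) ∨ (e.1 ∉ A ∧ e.2 ∈ A)) (hne' : ∀ e ∈ E', e.1 ≠ e.2)
    (hw : ∀ e ∈ E, 0 ≤ w e) [Nonempty ι] {Γ : Matrix ι ι ℝ}
    (hΓ : Γ ∈ Set.Icc (0 : Matrix ι ι ℝ) 1) (hhalf : 2 * Γ.trace ≤ Fintype.card ι) :
    ∃ M ∈ Set.Icc (0 : Matrix ι ι ℝ) 1, M.trace = Γ.trace ∧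
      ((∑ e ∈ E, w e) / 4 + hoppingEnergy E' w' Γ) /
          (2 * ((Fintype.card ι - 2 * Γ.trace) / Fintype.card ι + 3 / 2)) ≤
        interactionEnergy E w M + hoppingEnergy E' w' M := by
  have hne (e) (he : e ∈ E) : e.1 ≠ e.2 := ne_of_bipartite (hbip e he)
  have hN : (0 : ℝ) < Fintype.card ι := mod_cast Fintype.card_pos
  have hq : 0 ≤ Γ.trace := Finset.sum_nonneg fun j _ => (diag_mem_Icc hΓ j).1
  have hNq : 0 < Fintype.card ι - Γ.trace := by linarith
  set t : ℝ := (Fintype.card ι : ℝ) / (4 * (Fintype.card ι - Γ.trace)) with ht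
  have ht0 : 0 < t := by positivity
  have hratio : 2 * ((Fintype.card ι - 2 * Γ.trace) / Fintype.card ι + 3 / 2) = 1 + t⁻¹ := by
    rw [ht]; field_simp; ring
  rw [hratio]
  rcases le_max_iff.mp (add_div_one_add_inv_le_max ht0 ((∑ e ∈ E, w e) / 4)
    (hoppingEnergy E' w' Γ)) with hle | hle
  · obtain ⟨d, hd, hsum, hzero⟩ := exists_density_mul_eq_zero_of_bipartite A hbip hq hhalf
    refine ⟨diagonal d, diagonal_mem_Icc_iff.mpr hd, by rw [trace_diagonal, hsum], ?_⟩
    rwa [interactionEnergy_diagonal hne hzero, hoppingEnergy_diagonal hne', add_zero]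
  · obtain ⟨M, hM, htrace, hle_half, hoff⟩ := exists_damped_of_two_mul_trace_le hΓ hhalf
    refine ⟨M, hM, htrace, hle.trans ?_⟩
    have hhop : hoppingEnergy E' w' M = t * hoppingEnergy E' w' Γ := by
      rw [hoppingEnergy, hoppingEnergy, Finset.mul_sum]
      exact Finset.sum_congr rfl fun e he => by rw [hoff _ _ (hne' e he)]; ring
    rw [hhop]
    exact le_add_of_nonneg_left
      (interactionEnergy_nonneg hw fun j => ⟨(diag_mem_Icc hM j).1, hle_half j⟩)

end Optimization

theorem q_particle_traceless_CIFH_gaussian_general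
    (n : ℕ) (hn : 1 ≤ n)
    (c : Fin (2 * n) → Matrix (Fin (2 ^ n)) (Fin (2 ^ n)) ℂ) (hc : IsMajorana n c)
    (E E' : Finset (Fin n × Fin n)) (hE' : ∀ e ∈ E', e.1 ≠ e.2)
    (w : Fin n × Fin n → ℝ) (hw : ∀ e ∈ E, 0 ≤ w e) (w' : Fin n × Fin n → ℝ)
    (A : Finset (Fin n))
    (hbip : ∀ e ∈ E, (e.1 ∈ A ∧ e.2 ∉ A) ∨ (e.1 ∉ A ∧ e.2 ∈ A))
    (q : ℝ) (hq : 2 * q ≤ n)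
    (ρ' : Matrix (Fin (2 ^ n)) (Fin (2 ^ n)) ℂ) (hρ' : ρ'.PosSemidef) (htr : ρ'.trace = 1)
    (hN : (ρ' * totalNumber (ann n c)).trace = q) :
    ∃ ρ, IsGaussianState n c ρ ∧ (ρ * totalNumber (ann n c)).trace = q ∧
      (((ρ' * hamiltonian (ann n c) E E' w w').trace.re /
        (2 * ((n - 2 * q) / n + 3 / 2)) : ℝ) : ℂ) ≤
          (ρ * hamiltonian (ann n c) E E' w w').trace := by
  have hcar := hc.isCAR_ann
  have hne (e) (he : e ∈ E) : e.1 ≠ e.2 := ne_of_bipartite (hbip e he)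
  have : Nonempty (Fin n) := ⟨⟨0, hn⟩⟩
  have hΓ := hcar.reGram_mem_Icc hρ' htr
  have hΓtrace : (reGram ρ' (ann n c)).trace = q := by rw [trace_reGram, hN, Complex.ofReal_re]
  obtain ⟨M, hM, hMtrace, hMenergy⟩ := exists_mem_Icc_energy_ge (w' := w') A hbip hE' hw hΓ
    (by rwa [hΓtrace, Fintype.card_fin])
  have hMsymm : M.IsSymm := isHermitian_iff_isSymm.mp (nonneg_iff_posSemidef.mp hM.1).isHermitian
  obtain ⟨ρ, hρ, hquasi⟩ := hc.exists_isGaussianState_isQuasiFree hM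
  refine ⟨ρ, hρ, by rw [hquasi.trace_mul_totalNumber hcar, hMtrace, hΓtrace], ?_⟩
  rw [hquasi.trace_mul_hamiltonian hcar hMsymm hne, Complex.real_le_real]
  rw [hΓtrace, Fintype.card_fin] at hMenergy
  have hratio : 0 ≤ 2 * (((n : ℝ) - 2 * q) / n + 3 / 2) := by
    linarith [div_nonneg (sub_nonneg.mpr hq) n.cast_nonneg]
  exact (div_le_div_of_nonneg_right (hcar.re_trace_mul_hamiltonian_le hρ' htr hne hw)
    hratio).trans hMenergy

/-- `q`-particle traceless CIFH optimization on a bipartite interaction graph: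
there is a fermionic Gaussian state with mean particle number `q` achieving approximation
ratio `1/(2((n-2q)/n + 3/2))`. -/
theorem q_particle_traceless_CIFH_gaussian
    (n : ℕ) (hn : 1 ≤ n)
    (c : Fin (2*n) → Matrix (Fin (2^n)) (Fin (2^n)) ℂ) (hc : IsMajorana n c)
    (E E' : Finset (Fin n × Fin n))
    (hE : ∀ e ∈ E, e.1 < e.2) (hE' : ∀ e ∈ E', e.1 < e.2)
    (w : Fin n × Fin n → ℝ) (hw : ∀ e ∈ E, 0 ≤ w e)
    (w' : Fin n × Fin n → ℝ)
    (A : Finset (Fin n))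
    (hbip : ∀ e ∈ E, (e.1 ∈ A ∧ e.2 ∉ A) ∨ (e.1 ∉ A ∧ e.2 ∈ A))
    (q : ℕ) (hq : q ≤ n / 2)
    (H : Matrix (Fin (2^n)) (Fin (2^n)) ℂ)
    (hH : H = ∑ e ∈ E, (w e : ℂ) • (((1:ℂ)/4) • 1 - num n c e.1 * num n c e.2)
        + ∑ e ∈ E', (w' e : ℂ) •
            (-((ann n c e.1)ᴴ * ann n c e.2) - (ann n c e.2)ᴴ * ann n c e.1))
    (Nhat : Matrix (Fin (2^n)) (Fin (2^n)) ℂ)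
    (hNhat : Nhat = ∑ j, num n c j)
    (lamq : ℝ)
    (hlamq : IsGreatest {x : ℝ | ∃ ρ' : Matrix (Fin (2^n)) (Fin (2^n)) ℂ,
        ρ'.PosSemidef ∧ ρ'.trace = 1 ∧ (ρ' * Nhat).trace = (q : ℂ) ∧
        ((ρ' * H).trace).re = x} lamq) :
    ∃ ρ : Matrix (Fin (2^n)) (Fin (2^n)) ℂ,
      IsGaussianState n c ρ ∧ (ρ * Nhat).trace = (q : ℂ) ∧
      ((lamq / (2 * (((n : ℝ) - 2 * q) / n + 3/2)) : ℝ) : ℂ) ≤ (ρ * H).trace := by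
  subst hH hNhat
  obtain ⟨⟨ρ', hρ', htr, hN, rfl⟩, -⟩ := hlamq
  have hq' : 2 * (q : ℝ) ≤ n := mod_cast show 2 * q ≤ n by omega
  exact q_particle_traceless_CIFH_gaussian_general n hn c hc E E'
    (fun e he => (hE' e he).ne) w hw w' A hbip q hq' ρ' hρ' htr hN

end
end
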